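/- arXiv:2002.12053 — 2 statements merged into one kernel-verified Lean document; each statement's English description precedes it below -/
import Mathlib

section
/- Assume A is locally Noetherian. Let F_• be a complex of finitely generated graded free R-modules with F_i = 0 for i < 0 and H_i(F_•) = 0 for i > 0, and set M := H_0(F_•). Then the set U_M = { p ∈ Spec(A) : [M]_μ ⊗_A A_p is a free A_p-module for every μ ∈ G } is open in Spec(A). -/
/-!
The free locus is cut out by exactness conditions that descend to a Noetherian ring, and there it
is open by a Nagata-type criterion. In the monomial bases, the degree-`μ` strand of
`F_2 → F_1 → F_0` is a pair of matrices over `A` (finite, because `ψ` is positive on the weights),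
and `[M]_μ` is the cokernel of the first one.

*From freeness to exactness.* Since the strand is exact over `A`, the localization of `[M]_μ` at `p`
is free if and only if the strand stays exact over the residue field `κ(p)` (`free_localized_iff`,
the local criterion `Tor₁([M]_μ, κ(p)) = 0`). For a single `μ` this is an open condition
(`isOpen_matExact`), for any pair of matrices with product zero. It depends only on the contraction
of `p` to the subring `A₀` generated by the coefficients of the two differentials, so `U_M` is the
preimage of the corresponding subset of `Spec A₀`. The ring `A₀` is finitely generated over `ℤ`,
hence Noetherian, but the complex over `A₀` need not be exact any more.

*Infinitely many degrees.* An intersection of open subsets of `Spec A₀` is open as soon as it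
contains, with every point `q`, a nonempty open subset of the closure of `q`
(`isOpen_iInter_of_generic`, by Noetherian induction). So let `D = A₀ ⧸ q`, and assume all strands
are exact over `Frac D`. One nonzero `f ∈ D` has to be found such that all strands are exact over
every field in which `f` does not vanish (`exists_generic_matExact`). There are two ingredients.

* The homology of `D[x]^n₂ → D[x]^n₁ → D[x]^n₀` is a finitely generated `D[x]`-module which is
  torsion over `D`, so some nonzero `f₂ ∈ D` kills it (`exists_smul_homology_eq_zero`).
* Division by a Gröbner basis, with `f₁` the product of its leading coefficients, makes the cokernel
  of `D[x]^n₁ → D[x]^n₀` free over `D` after inverting `f₁`, on the monomials that are not leading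
  monomials (`exists_division`). So in every degree the first matrix `D₁` has a partial inverse `S`
  with `D₁ S D₁ = f₁ ^ N D₁`.

Together they give, in every degree, a homotopy `f₂ S D₁ + D₂ T = f₂ f₁ ^ N`, proving exactness
wherever `f₁ f₂` is invertible.
-/

/-!
STATEMENT 3 (Lemma `TM`(iii)).
Setup: `A` a commutative ring, `G` an abelian group, `R = A[x_1,…,x_r]` graded
by `G` via weights `w : Fin r → G`, and a `ℤ`-linear `ψ : G → ℤ` with
`ψ (w i) > 0` for all `i`.  Assume `A` is locally Noetherian.

Let `F_•` be a complex of finitely generated graded free `R`-modules with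
`F i = 0` for `i < 0` and `H_i(F_•) = 0` for `i > 0`, and let `M := H_0(F_•)`
(`= F_0 / im(F_1 → F_0)`), with its induced grading `[M]_μ` by `A`-modules.
Then `U_M = { p ∈ Spec A : [M]_μ ⊗_A A_p is A_p-free for all μ ∈ G }`
is open in `Spec A`.
-/

open MvPolynomial

/-- A `ℤ`-indexed complex of finitely generated graded free modules over the
`G`-graded polynomial ring `R = A[x_1,…,x_r]`, presented by matrices with
homogeneous entries. `d i` is the matrix of the differential `F (i+1) → F i`. -/
structure GradedFreeComplex (A : Type) [CommRing A] (G : Type) [AddCommGroup G]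
    (r : ℕ) (w : Fin r → G) where
  rank : ℤ → ℕ
  shift : ∀ i : ℤ, Fin (rank i) → G
  d : ∀ i : ℤ, Matrix (Fin (rank i)) (Fin (rank (i + 1))) (MvPolynomial (Fin r) A)
  d_homog : ∀ (i : ℤ) (j k), IsWeightedHomogeneous w (d i j k) (shift (i + 1) k - shift i j)
  d_comp : ∀ i : ℤ, d i * d (i + 1) = 0

/-- The degree-`μ` strand of the graded free module `⊕_j R(-sh j)`. -/
noncomputable def gradedFreeStrand (A : Type) [CommRing A] {G : Type} [AddCommGroup G]
    (r : ℕ) (w : Fin r → G) (n : ℕ) (sh : Fin n → G) (μ : G) :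
    Submodule A (Fin n → MvPolynomial (Fin r) A) :=
  Submodule.pi Set.univ fun j => weightedHomogeneousSubmodule A w (μ - sh j)

/-- The linear map `F (i+1) → F i` given by the matrix `d i`. -/
noncomputable def GradedFreeComplex.diff {A : Type} [CommRing A] {G : Type}
    [AddCommGroup G] {r : ℕ} {w : Fin r → G} (F : GradedFreeComplex A G r w) (i : ℤ) :
    (Fin (F.rank (i + 1)) → MvPolynomial (Fin r) A) →ₗ[MvPolynomial (Fin r) A]
      (Fin (F.rank i) → MvPolynomial (Fin r) A) :=
  Matrix.mulVecLin (F.d i)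

/-- `M := H_0(F_•) = F_0 / im (F_1 → F_0)` for a complex with `F_i = 0` for `i < 0`. -/
noncomputable abbrev GradedFreeComplex.H0 {A : Type} [CommRing A] {G : Type}
    [AddCommGroup G] {r : ℕ} {w : Fin r → G} (F : GradedFreeComplex A G r w) : Type :=
  (Fin (F.rank 0) → MvPolynomial (Fin r) A) ⧸ LinearMap.range (F.diff 0)

/-- The induced grading `[M]_μ` on `M = H_0(F_•)`, by `A`-submodules. -/
noncomputable def GradedFreeComplex.H0grading {A : Type} [CommRing A] {G : Type}
    [AddCommGroup G] {r : ℕ} {w : Fin r → G} (F : GradedFreeComplex A G r w) (μ : G) :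
    Submodule A F.H0 :=
  Submodule.map ((LinearMap.range (F.diff 0)).mkQ.restrictScalars A)
    (gradedFreeStrand A r w (F.rank 0) (F.shift 0) μ)

/-! ### Exactness of pairs of matrices and freeness of cokernels -/

section LinAlg

open scoped Matrix

variable {I₀ I₁ I₂ : Type} [Fintype I₀] [Fintype I₁] [Fintype I₂]

/-- Exactness at the middle term of the sequence `R^I₂ → R^I₁ → R^I₀` given by two matrices:
every vector killed by `D₁` lies in the image of `D₂`. -/
def MatExact {R : Type} [CommRing R] (D₁ : Matrix I₀ I₁ R) (D₂ : Matrix I₁ I₂ R) : Prop :=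
  ∀ v, D₁ *ᵥ v = 0 → ∃ u, D₂ *ᵥ u = v

theorem exists_matrix_lift [DecidableEq I₀] {R : Type} [CommRing R] {J : Type}
    (D : Matrix J I₁ R) (g : (I₀ → R) →ₗ[R] (J → R)) (h : ∀ x, ∃ u, D *ᵥ u = g x) :
    ∃ S : Matrix I₁ I₀ R, ∀ x, D *ᵥ (S *ᵥ x) = g x := by
  choose u hu using h
  refine ⟨Matrix.of fun k i => u (Pi.single i 1) k, fun x => ?_⟩
  suffices h : D.mulVecLin ∘ₗ (Matrix.of fun k i => u (Pi.single i 1) k).mulVecLin = g from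
    LinearMap.congr_fun h x
  refine LinearMap.pi_ext' fun i => LinearMap.ext_ring ?_
  have : (Matrix.of fun k i => u (Pi.single i 1) k) *ᵥ Pi.single i 1 = u (Pi.single i 1) := by
    ext k; simp
  simp [this, hu]

/-- If `R^I₂ → R^I₁ → R^I₀ → N → 0` is exact with `N` projective, the identity of `R^I₁` is
null-homotopic: splitting `R^I₀ → N` gives `S`, and `1 - S D₁` maps into `ker D₁ = im D₂`. -/
theorem exists_contraction [DecidableEq I₀] [DecidableEq I₁] {R : Type} [CommRing R]
    {D₁ : Matrix I₀ I₁ R} {D₂ : Matrix I₁ I₂ R}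
    (hex : MatExact D₁ D₂) {N : Type} [AddCommGroup N] [Module R N] [Module.Projective R N]
    (q : (I₀ → R) →ₗ[R] N) (hq : Function.Surjective q)
    (hk : ∀ v, q v = 0 ↔ ∃ u, D₁ *ᵥ u = v) :
    ∃ (S : Matrix I₁ I₀ R) (T : Matrix I₂ I₁ R), S * D₁ + D₂ * T = 1 := by
  obtain ⟨σ, hσ⟩ := Module.projective_lifting_property q LinearMap.id hq
  have hσ' : ∀ x, q (σ x) = x := fun x => LinearMap.congr_fun hσ x
  obtain ⟨S, hS⟩ := exists_matrix_lift D₁ (LinearMap.id - σ ∘ₗ q) fun x => by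
    rw [← hk]; simp [hσ']
  obtain ⟨T, hT⟩ := exists_matrix_lift D₂ (LinearMap.id - (S * D₁).mulVecLin) fun x => by
    refine hex _ ?_
    have h1 : q (D₁ *ᵥ x) = 0 := (hk _).2 ⟨x, rfl⟩
    rw [LinearMap.sub_apply, Matrix.mulVec_sub, Matrix.mulVecLin_apply, ← Matrix.mulVec_mulVec, hS]
    simp [h1]
  refine ⟨S, T, Matrix.ext_of_mulVec_single fun i => ?_⟩
  rw [Matrix.add_mulVec, ← Matrix.mulVec_mulVec _ D₂, hT]
  simp only [LinearMap.sub_apply, LinearMap.id_apply, Matrix.mulVecLin_apply, add_sub_cancel,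
    Matrix.one_mulVec]

theorem exists_contraction_field [DecidableEq I₀] [DecidableEq I₁] {k : Type} [Field k]
    {D₁ : Matrix I₀ I₁ k} {D₂ : Matrix I₁ I₂ k} (hex : MatExact D₁ D₂) :
    ∃ (S : Matrix I₁ I₀ k) (T : Matrix I₂ I₁ k), S * D₁ + D₂ * T = 1 :=
  exists_contraction hex (LinearMap.range D₁.mulVecLin).mkQ (Submodule.mkQ_surjective _)
    fun v => by simp [LinearMap.mem_range]

/-- A homotopy between `0` and multiplication by `c` proves exactness over every field in which `c`
becomes invertible. -/
theorem matExact_map_of_contraction [DecidableEq I₁] {R k : Type} [CommRing R] [Field k]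
    (φ : R →+* k) {D₁ : Matrix I₀ I₁ R} {D₂ : Matrix I₁ I₂ R} {S : Matrix I₁ I₀ R}
    {T : Matrix I₂ I₁ R} {c : R} (h : S * D₁ + D₂ * T = c • (1 : Matrix I₁ I₁ R)) (hc : φ c ≠ 0) :
    MatExact (D₁.map φ) (D₂.map φ) := by
  intro v hv
  refine ⟨(φ c)⁻¹ • (T.map φ *ᵥ v), ?_⟩
  have h' : S.map φ * D₁.map φ + D₂.map φ * T.map φ = φ c • (1 : Matrix I₁ I₁ k) := by
    have := congrArg (fun M : Matrix I₁ I₁ R => M.map φ) h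
    rw [Matrix.map_add _ (map_add φ), Matrix.map_mul, Matrix.map_mul] at this
    rw [this]
    ext i j
    by_cases hij : i = j <;> simp [hij]
  have := congrArg (· *ᵥ v) h'
  simp only [Matrix.add_mulVec, ← Matrix.mulVec_mulVec, hv, Matrix.mulVec_zero, zero_add,
    Matrix.smul_mulVec, Matrix.one_mulVec] at this
  rw [Matrix.mulVec_smul, this, inv_smul_smul₀ hc]

/-- A homotopy between `0` and an invertible endomorphism `E` forces exactness over a field:
`E` maps `ker D₁` injectively, hence bijectively, to itself, and it maps it into `im D₂`. -/
theorem matExact_of_det_ne_zero [DecidableEq I₁] {k : Type} [Field k]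
    {D₁ : Matrix I₀ I₁ k} {D₂ : Matrix I₁ I₂ k} (hD : D₁ * D₂ = 0) (S : Matrix I₁ I₀ k)
    (T : Matrix I₂ I₁ k) (h : (S * D₁ + D₂ * T).det ≠ 0) : MatExact D₁ D₂ := by
  set E := S * D₁ + D₂ * T with hE
  have hker : ∀ v ∈ LinearMap.ker D₁.mulVecLin, E *ᵥ v = D₂ *ᵥ (T *ᵥ v) := by
    intro v hv
    have hv' : D₁ *ᵥ v = 0 := hv
    simp [hE, Matrix.add_mulVec, ← Matrix.mulVec_mulVec, hv']
  have hmap : ∀ v ∈ LinearMap.ker D₁.mulVecLin, E.mulVecLin v ∈ LinearMap.ker D₁.mulVecLin := by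
    intro v hv
    rw [Matrix.mulVecLin_apply, hker v hv, LinearMap.mem_ker, Matrix.mulVecLin_apply,
      Matrix.mulVec_mulVec, hD, Matrix.zero_mulVec]
  have hinj : Function.Injective (E.mulVecLin.restrict hmap) := by
    intro x y hxy
    have := congrArg Subtype.val hxy
    simp only [LinearMap.coe_restrict_apply, Matrix.mulVecLin_apply] at this
    exact Subtype.ext (Matrix.mulVec_injective_of_isUnit
      ((Matrix.isUnit_iff_isUnit_det E).2 h.isUnit) this)
  intro v hv
  obtain ⟨x, hx⟩ := LinearMap.injective_iff_surjective.1 hinj ⟨v, hv⟩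
  refine ⟨T *ᵥ x.1, ?_⟩
  rw [← hker x.1 x.2]
  exact congrArg Subtype.val hx

/-- Exactness of a pair of matrices over the residue field at `q` is witnessed by a homotopy over
`R` whose determinant does not vanish at `q`: clear denominators in a contraction over `κ(q)`. -/
theorem exists_det_notMem [DecidableEq I₀] [DecidableEq I₁] {R : Type} [CommRing R]
    (q : Ideal R) [q.IsPrime] {D₁ : Matrix I₀ I₁ R} {D₂ : Matrix I₁ I₂ R}
    (hex : MatExact (D₁.map (algebraMap R q.ResidueField)) (D₂.map (algebraMap R q.ResidueField))) :
    ∃ (S : Matrix I₁ I₀ R) (T : Matrix I₂ I₁ R), (S * D₁ + D₂ * T).det ∉ q := by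
  obtain ⟨S, T, h⟩ := exists_contraction_field hex
  obtain ⟨⟨b, hb⟩, hST⟩ := IsLocalization.exist_integer_multiples_of_finite
    (nonZeroDivisors (R ⧸ q)) (S := q.ResidueField)
    (Sum.elim (fun x : I₁ × I₀ => S x.1 x.2) (fun x : I₂ × I₁ => T x.1 x.2))
  obtain ⟨c, rfl⟩ := Ideal.Quotient.mk_surjective b
  have hc : algebraMap R q.ResidueField c ≠ 0 := by
    rw [Ne, Ideal.algebraMap_residueField_eq_zero, ← Ideal.Quotient.eq_zero_iff_mem]
    exact nonZeroDivisors.ne_zero hb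
  have hsm : ∀ x : q.ResidueField, Ideal.Quotient.mk q c • x = algebraMap R q.ResidueField c * x :=
    fun x => by rw [Algebra.smul_def]; rfl
  have lift : ∀ x : q.ResidueField, IsLocalization.IsInteger (R ⧸ q) (Ideal.Quotient.mk q c • x) →
      ∃ y : R, algebraMap R q.ResidueField y = algebraMap R q.ResidueField c * x := by
    rintro x ⟨y, hy⟩
    obtain ⟨y, rfl⟩ := Ideal.Quotient.mk_surjective y
    exact ⟨y, by rw [← hsm, ← hy]; rfl⟩
  choose S' hS' using fun (i : I₁) (j : I₀) => lift (S i j) (hST (Sum.inl (i, j)))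
  choose T' hT' using fun (i : I₂) (j : I₁) => lift (T i j) (hST (Sum.inr (i, j)))
  refine ⟨Matrix.of S', Matrix.of T', fun hdet => ?_⟩
  rw [← Ideal.algebraMap_residueField_eq_zero, RingHom.map_det] at hdet
  have h1 : (Matrix.of S').map (algebraMap R q.ResidueField)
      = algebraMap R q.ResidueField c • S := by ext i j; simp [hS']
  have h2 : (Matrix.of T').map (algebraMap R q.ResidueField)
      = algebraMap R q.ResidueField c • T := by ext i j; simp [hT']
  rw [RingHom.mapMatrix_apply, Matrix.map_add _ (map_add _), Matrix.map_mul, Matrix.map_mul,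
    h1, h2, Matrix.smul_mul, Matrix.mul_smul, ← smul_add, h, Matrix.det_smul, Matrix.det_one,
    mul_one] at hdet
  exact pow_ne_zero _ hc hdet

/-- If a homotopy `S D₁ + D₂ T` is invertible over `R`, then `coker D₁` is projective.  On
`Z = im D₁` the map `D₁ S` is onto, since `D₁ S D₁ = D₁ (S D₁ + D₂ T)`, hence bijective, and
its inverse composed with `D₁ S` is a retraction of `R^I₀` onto `Z`. -/
theorem projective_of_isUnit_det [DecidableEq I₁] {R : Type} [CommRing R]
    {D₁ : Matrix I₀ I₁ R} {D₂ : Matrix I₁ I₂ R} (hD : D₁ * D₂ = 0) (S : Matrix I₁ I₀ R)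
    (T : Matrix I₂ I₁ R) (h : IsUnit (S * D₁ + D₂ * T).det)
    {N : Type} [AddCommGroup N] [Module R N] (q : (I₀ → R) →ₗ[R] N) (hq : Function.Surjective q)
    (hk : ∀ v, q v = 0 ↔ ∃ u, D₁ *ᵥ u = v) : Module.Projective R N := by
  set Z := LinearMap.range D₁.mulVecLin with hZ
  let P : (I₀ → R) →ₗ[R] Z := D₁.mulVecLin.rangeRestrict ∘ₗ S.mulVecLin
  have hP : ∀ x, (P x : I₀ → R) = D₁ *ᵥ (S *ᵥ x) := fun x => rfl
  have hsurj : Function.Surjective (P ∘ₗ Z.subtype) := by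
    rintro ⟨_, y, rfl⟩
    let E := S * D₁ + D₂ * T
    refine ⟨⟨D₁ *ᵥ (E⁻¹ *ᵥ y), _, rfl⟩, Subtype.ext ?_⟩
    have : D₁ * S * D₁ = D₁ * (S * D₁ + D₂ * T) := by
      rw [Matrix.mul_add, ← Matrix.mul_assoc, ← Matrix.mul_assoc, hD, Matrix.zero_mul, add_zero]
    simp only [LinearMap.comp_apply, Submodule.subtype_apply, hP, Matrix.mulVec_mulVec,
      Matrix.mulVecLin_apply]
    rw [← Matrix.mul_assoc, ← Matrix.mul_assoc, this, Matrix.mul_assoc, Matrix.mul_nonsing_inv _ h,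
      Matrix.mul_one]
  have : Module.Finite R Z := Module.Finite.range _
  have hinj := OrzechProperty.injective_of_surjective_endomorphism _ hsurj
  let e := LinearEquiv.ofBijective _ ⟨hinj, hsurj⟩
  let ρ : (I₀ → R) →ₗ[R] Z := e.symm.toLinearMap ∘ₗ P
  have hρ : ∀ z : Z, ρ z = z := fun z => e.symm_apply_apply z
  have hker : LinearMap.ker q = Z := by
    ext v; rw [LinearMap.mem_ker, hk]; rfl
  let g : (I₀ → R) →ₗ[R] (I₀ → R) := LinearMap.id - Z.subtype ∘ₗ ρ
  have hg : LinearMap.ker q ≤ LinearMap.ker g := by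
    intro z hz
    rw [hker] at hz
    have := hρ ⟨z, hz⟩
    simp only at this
    simp [g, this]
  let s : N →ₗ[R] (I₀ → R) :=
    (LinearMap.ker q).liftQ g hg ∘ₗ (q.quotKerEquivOfSurjective hq).symm.toLinearMap
  refine Module.Projective.of_split s q (LinearMap.ext fun n => ?_)
  obtain ⟨v, rfl⟩ := hq n
  have h1 : s (q v) = g v := by
    have : (q.quotKerEquivOfSurjective hq).symm (q v) = (LinearMap.ker q).mkQ v := by
      rw [LinearEquiv.symm_apply_eq]; rfl
    simp [s, this]
  have h2 : q (ρ v : I₀ → R) = 0 := (hk _).2 (ρ v).2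
  simp [h1, g, h2]

theorem matExact_map_iff [DecidableEq I₀] [DecidableEq I₁] {k K : Type} [Field k] [Field K]
    (φ : k →+* K) {D₁ : Matrix I₀ I₁ k} {D₂ : Matrix I₁ I₂ k} :
    MatExact (D₁.map φ) (D₂.map φ) ↔ MatExact D₁ D₂ := by
  constructor
  · intro h v hv
    have hv' : D₁.map φ *ᵥ (φ ∘ v) = 0 := by
      ext i
      rw [← RingHom.map_mulVec, hv]; simp
    obtain ⟨u, hu⟩ := h _ hv'
    -- a `k`-linear retraction `K → k` turns a solution over `K` into one over `k`
    let := φ.toAlgebra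
    obtain ⟨ρ, hρ⟩ := (Algebra.linearMap k K).exists_leftInverse_of_injective
      (LinearMap.ker_eq_bot.2 φ.injective)
    have hρ' : ∀ a, ρ (φ a) = a := fun a => LinearMap.congr_fun hρ a
    refine ⟨ρ ∘ u, funext fun i => ?_⟩
    have h1 := congrArg ρ (congrFun hu i)
    rw [Function.comp_apply, hρ'] at h1
    rw [← h1]
    simp only [Matrix.mulVec, dotProduct, map_sum, Matrix.map_apply, Function.comp_apply]
    refine Finset.sum_congr rfl fun j _ => ?_
    rw [← smul_eq_mul, ← map_smul, Algebra.smul_def]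
    rfl
  · intro h
    obtain ⟨S, T, hST⟩ := exists_contraction_field h
    exact matExact_map_of_contraction φ (c := 1) (by simpa using hST) (by simp)

/-- Over the residue field at `p` nothing changes when a pair of matrices is pulled back
along a ring homomorphism. -/
theorem matExact_residueField_comap_iff [DecidableEq I₀] [DecidableEq I₁] {R R' : Type}
    [CommRing R] [CommRing R'] (φ : R →+* R') (p : Ideal R') [p.IsPrime]
    {D₁ : Matrix I₀ I₁ R} {D₂ : Matrix I₁ I₂ R} :
    MatExact ((D₁.map φ).map (algebraMap R' p.ResidueField))
        ((D₂.map φ).map (algebraMap R' p.ResidueField)) ↔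
      MatExact (D₁.map (algebraMap R (p.comap φ).ResidueField))
        (D₂.map (algebraMap R (p.comap φ).ResidueField)) := by
  rw [← matExact_map_iff (Ideal.ResidueField.map (p.comap φ) p φ rfl)]
  simp [Matrix.map_map, Function.comp_def]

theorem isOpen_matExact [DecidableEq I₀] [DecidableEq I₁] {R : Type} [CommRing R]
    {D₁ : Matrix I₀ I₁ R} {D₂ : Matrix I₁ I₂ R} (hD : D₁ * D₂ = 0) :
    IsOpen {q : PrimeSpectrum R | MatExact (D₁.map (algebraMap R q.asIdeal.ResidueField))
      (D₂.map (algebraMap R q.asIdeal.ResidueField))} := by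
  refine isOpen_iff_forall_mem_open.2 fun q hq => ?_
  obtain ⟨S, T, h⟩ := exists_det_notMem q.asIdeal hq
  refine ⟨PrimeSpectrum.basicOpen (S * D₁ + D₂ * T).det, fun q' hq' => ?_,
    PrimeSpectrum.isOpen_basicOpen, h⟩
  have hmul : D₁.map (algebraMap R q'.asIdeal.ResidueField) *
      D₂.map (algebraMap R q'.asIdeal.ResidueField) = 0 := by
    rw [← Matrix.map_mul, hD, Matrix.map_zero _ (map_zero _)]
  refine matExact_of_det_ne_zero hmul (S.map (algebraMap R _)) (T.map (algebraMap R _)) ?_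
  rw [← Matrix.map_mul, ← Matrix.map_mul, ← Matrix.map_add _ (map_add _),
    ← RingHom.mapMatrix_apply, ← RingHom.map_det, Ne, Ideal.algebraMap_residueField_eq_zero]
  exact hq'

section Localization

variable {A : Type} [CommRing A] (p : Ideal A) [p.IsPrime]

/-- The coordinatewise localization map `A^I → A_p^I`. -/
noncomputable def locPi (I : Type) : (I → A) →ₗ[A] (I → Localization.AtPrime p) :=
  LinearMap.pi fun i => Algebra.linearMap A (Localization.AtPrime p) ∘ₗ LinearMap.proj i

instance (I : Type) [Finite I] : IsLocalizedModule p.primeCompl (locPi p I) := by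
  unfold locPi; infer_instance

theorem map_mulVecLin_eq (D : Matrix I₀ I₁ A) (x : I₁ → Localization.AtPrime p) :
    IsLocalizedModule.map p.primeCompl (locPi p I₁) (locPi p I₀) D.mulVecLin x =
      D.map (algebraMap A (Localization.AtPrime p)) *ᵥ x := by
  suffices h : IsLocalizedModule.map p.primeCompl (locPi p I₁) (locPi p I₀) D.mulVecLin =
      (D.map (algebraMap A (Localization.AtPrime p))).mulVecLin.restrictScalars A from
    LinearMap.congr_fun h x
  refine IsLocalizedModule.ext p.primeCompl (locPi p I₁)
    (IsLocalizedModule.map_units (locPi p I₀)) ?_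
  ext x : 1
  rw [LinearMap.comp_apply, IsLocalizedModule.map_apply]
  ext i
  simp [locPi, Matrix.mulVec, dotProduct]

/-- Given an exact sequence `A^I₂ → A^I₁ → A^I₀ → N → 0`, the localization `N_p` is free if and
only if the sequence stays exact at `A^I₁` after base change to the residue field at `p`, i.e. if
and only if `Tor₁(N, κ(p)) = 0`. -/
theorem free_localized_iff [DecidableEq I₀] [DecidableEq I₁]
    {D₁ : Matrix I₀ I₁ A} {D₂ : Matrix I₁ I₂ A} (hD : D₁ * D₂ = 0) (hex : MatExact D₁ D₂)
    {N : Type} [AddCommGroup N] [Module A N] (q : (I₀ → A) →ₗ[A] N) (hq : Function.Surjective q)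
    (hk : ∀ v, q v = 0 ↔ ∃ u, D₁ *ᵥ u = v) :
    Module.Free (Localization.AtPrime p) (LocalizedModule p.primeCompl N) ↔
      MatExact (D₁.map (algebraMap A p.ResidueField)) (D₂.map (algebraMap A p.ResidueField)) := by
  let loc := algebraMap A (Localization.AtPrime p)
  let Q : (I₀ → Localization.AtPrime p) →ₗ[Localization.AtPrime p] LocalizedModule p.primeCompl N :=
    IsLocalizedModule.mapExtendScalars p.primeCompl (locPi p I₀)
      (LocalizedModule.mkLinearMap p.primeCompl N) (Localization.AtPrime p) q
  have hQ : ∀ x, Q x = IsLocalizedModule.map p.primeCompl (locPi p I₀)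
      (LocalizedModule.mkLinearMap p.primeCompl N) q x := fun x => rfl
  have hQs : Function.Surjective Q :=
    IsLocalizedModule.map_surjective p.primeCompl (locPi p I₀)
      (LocalizedModule.mkLinearMap p.primeCompl N) q hq
  have hQk : ∀ v, Q v = 0 ↔ ∃ u, D₁.map loc *ᵥ u = v := by
    intro v
    rw [hQ, IsLocalizedModule.map_exact p.primeCompl (locPi p I₁) (locPi p I₀)
      (LocalizedModule.mkLinearMap p.primeCompl N) D₁.mulVecLin q (fun y => by rw [hk]; rfl) v]
    simp only [Set.mem_range, map_mulVecLin_eq, loc]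
  have hexL : MatExact (D₁.map loc) (D₂.map loc) := by
    intro v hv
    have h1 : Function.Exact D₂.mulVecLin D₁.mulVecLin := by
      intro y
      refine ⟨fun h => hex y h, ?_⟩
      rintro ⟨u, rfl⟩
      simp [hD]
    have h2 := (IsLocalizedModule.map_exact p.primeCompl (locPi p I₂) (locPi p I₁) (locPi p I₀)
      D₂.mulVecLin D₁.mulVecLin h1 v).1 (by rw [map_mulVecLin_eq]; exact hv)
    simpa only [Set.mem_range, map_mulVecLin_eq] using h2
  have hmulL : D₁.map loc * D₂.map loc = 0 := by
    rw [← Matrix.map_mul, hD, Matrix.map_zero _ (map_zero _)]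
  have hres : ∀ {I J : Type} (D : Matrix I J A), D.map (algebraMap A p.ResidueField) =
      (D.map loc).map (algebraMap (Localization.AtPrime p) p.ResidueField) := by
    intro I J D
    ext i j
    exact IsScalarTower.algebraMap_apply A (Localization.AtPrime p) p.ResidueField _
  constructor
  · intro hfree
    obtain ⟨S, T, h⟩ := exists_contraction hexL Q hQs hQk
    rw [hres, hres]
    exact matExact_map_of_contraction _ (c := 1) (by simpa using h) (by simp)
  · intro h
    obtain ⟨S, T, hdet⟩ := exists_det_notMem p h
    have hproj : Module.Projective (Localization.AtPrime p) (LocalizedModule p.primeCompl N) := by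
      refine projective_of_isUnit_det hmulL (S.map loc) (T.map loc) ?_ Q hQs hQk
      rw [← Matrix.map_mul, ← Matrix.map_mul, ← Matrix.map_add _ (map_add _),
        ← RingHom.mapMatrix_apply, ← RingHom.map_det]
      exact IsLocalization.map_units (Localization.AtPrime p) (⟨_, hdet⟩ : p.primeCompl)
    have : Module.Finite (Localization.AtPrime p) (LocalizedModule p.primeCompl N) :=
      Module.Finite.of_surjective Q hQs
    exact Module.free_of_flat_of_isLocalRing

end Localization

end LinAlg

/-! ### Strands of graded free modules -/

section Strands

open scoped Matrix

variable {R : Type} [CommRing R] {r n : ℕ}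

/-- The coefficient of `x^t.2 • e_{t.1}` in a vector of polynomials. -/
noncomputable def vecCoeff (t : Fin n × (Fin r →₀ ℕ)) :
    (Fin n → MvPolynomial (Fin r) R) →ₗ[R] R :=
  MvPolynomial.lcoeff R t.2 ∘ₗ LinearMap.proj t.1

theorem vecCoeff_apply (t : Fin n × (Fin r →₀ ℕ)) (v : Fin n → MvPolynomial (Fin r) R) :
    vecCoeff t v = coeff t.2 (v t.1) := rfl

/-- The vector `c x^t.2 • e_{t.1}`. -/
noncomputable def vecMono (t : Fin n × (Fin r →₀ ℕ)) :
    R →ₗ[R] (Fin n → MvPolynomial (Fin r) R) :=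
  LinearMap.single R (fun _ : Fin n => MvPolynomial (Fin r) R) t.1 ∘ₗ monomial t.2

theorem vecMono_apply (t : Fin n × (Fin r →₀ ℕ)) (c : R) :
    vecMono t c = Pi.single t.1 (monomial t.2 c) := rfl

theorem vecCoeff_vecMono (t s : Fin n × (Fin r →₀ ℕ)) (c : R) :
    vecCoeff t (vecMono s c) = if s = t then c else 0 := by
  classical
  obtain ⟨j, a⟩ := t
  obtain ⟨i, b⟩ := s
  rw [vecCoeff_apply, vecMono_apply]
  by_cases h : i = j
  · subst h
    simp [coeff_monomial]
  · simp [h, Ne.symm h]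

theorem vec_ext {u v : Fin n → MvPolynomial (Fin r) R} (h : ∀ t, vecCoeff t u = vecCoeff t v) :
    u = v :=
  funext fun j => MvPolynomial.ext _ _ fun a => h (j, a)

theorem finite_vecCoeff_ne_zero (v : Fin n → MvPolynomial (Fin r) R) :
    {t | vecCoeff t v ≠ 0}.Finite := by
  refine (Set.Finite.prod Set.finite_univ
    (Set.finite_iUnion fun j => (v j).support.finite_toSet)).subset ?_
  rintro t ht
  refine ⟨trivial, Set.mem_iUnion.2 ⟨t.1, ?_⟩⟩
  simpa [vecCoeff_apply] using ht

theorem vec_mem_of_vecMono_mem (P : Submodule R (Fin n → MvPolynomial (Fin r) R))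
    (u : Fin n → MvPolynomial (Fin r) R)
    (h : ∀ t, vecCoeff t u ≠ 0 → vecMono t (vecCoeff t u) ∈ P) : u ∈ P := by
  classical
  have hu : u = ∑ t ∈ (finite_vecCoeff_ne_zero u).toFinset, vecMono t (vecCoeff t u) := by
    refine vec_ext fun t => ?_
    rw [map_sum]
    simp only [vecCoeff_vecMono]
    rw [Finset.sum_ite_eq']
    by_cases ht : vecCoeff t u = 0 <;> simp [ht]
  rw [hu]
  exact P.sum_mem fun t ht => h t (by simpa using ht)

variable {G : Type} [AddCommGroup G] (w : Fin r → G)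

/-- The monomial basis of the degree-`μ` strand of `⊕_j R[x](-sh j)`. -/
abbrev StrandIdx (sh : Fin n → G) (μ : G) : Type :=
  {t : Fin n × (Fin r →₀ ℕ) // Finsupp.weight w t.2 + sh t.1 = μ}

/-- The weights being positive under `ψ`, only finitely many monomials have a given degree. -/
theorem finite_strandIdx (ψ : G →+ ℤ) (hψ : ∀ i, 0 < ψ (w i)) (sh : Fin n → G) (μ : G) :
    Finite (StrandIdx w sh μ) := by
  have key : ∀ a : Fin r →₀ ℕ, ∀ i, (a i : ℤ) ≤ ψ (Finsupp.weight w a) := by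
    intro a i
    rw [Finsupp.weight_apply, Finsupp.sum_fintype _ _ (by simp), map_sum]
    have h1 : (a i : ℤ) ≤ ψ (a i • w i) := by
      rw [map_nsmul, nsmul_eq_mul]
      nlinarith [hψ i, Int.natCast_nonneg (a i)]
    refine h1.trans (Finset.single_le_sum (f := fun i => ψ (a i • w i)) (fun j _ => ?_)
      (Finset.mem_univ i))
    simp only [map_nsmul]
    exact nsmul_nonneg (hψ j).le _
  have hfin : {t : Fin n × (Fin r →₀ ℕ) | Finsupp.weight w t.2 + sh t.1 = μ}.Finite := by
    refine (Set.Finite.prod Set.finite_univ (Set.finite_iUnion fun j : Fin n =>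
      Set.finite_Iic (Finsupp.equivFunOnFinite.symm
        fun _ : Fin r => (ψ (μ - sh j)).toNat))).subset ?_
    rintro t ht
    refine ⟨trivial, Set.mem_iUnion.2 ⟨t.1, fun i => ?_⟩⟩
    have h2 := key t.2 i
    have h3 : Finsupp.weight w t.2 = μ - sh t.1 := eq_sub_of_add_eq ht
    rw [h3] at h2
    simp only [Finsupp.equivFunOnFinite_symm_apply_apply]
    omega
  exact hfin.to_subtype

/-- Projection of a vector to its degree-`μ` component, in coordinates. -/
noncomputable def strandProj (sh : Fin n → G) (μ : G) :
    (Fin n → MvPolynomial (Fin r) R) →ₗ[R] (StrandIdx w sh μ → R) :=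
  LinearMap.pi fun t => vecCoeff t.1

/-- Inclusion of the degree-`μ` strand, in coordinates. -/
noncomputable def strandIncl (sh : Fin n → G) (μ : G) [Fintype (StrandIdx w sh μ)] :
    (StrandIdx w sh μ → R) →ₗ[R] (Fin n → MvPolynomial (Fin r) R) :=
  ∑ t : StrandIdx w sh μ, vecMono t.1 ∘ₗ LinearMap.proj t

variable {w}

@[simp] theorem strandProj_apply {sh : Fin n → G} {μ : G} (v : Fin n → MvPolynomial (Fin r) R)
    (t : StrandIdx w sh μ) : strandProj w sh μ v t = vecCoeff t.1 v := rfl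

theorem vecCoeff_strandIncl {sh : Fin n → G} {μ : G} [Fintype (StrandIdx w sh μ)]
    (x : StrandIdx w sh μ → R) (t : StrandIdx w sh μ) :
    vecCoeff t.1 (strandIncl w sh μ x) = x t := by
  classical
  simp only [strandIncl, LinearMap.sum_apply, LinearMap.comp_apply, LinearMap.proj_apply, map_sum,
    vecCoeff_vecMono]
  rw [Finset.sum_eq_single t]
  · simp
  · intro s _ hs
    rw [if_neg fun h => hs (Subtype.ext h)]
  · simp

theorem vecCoeff_strandIncl_of_ne {sh : Fin n → G} {μ : G} [Fintype (StrandIdx w sh μ)]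
    (x : StrandIdx w sh μ → R) {t : Fin n × (Fin r →₀ ℕ)}
    (ht : Finsupp.weight w t.2 + sh t.1 ≠ μ) : vecCoeff t (strandIncl w sh μ x) = 0 := by
  classical
  simp only [strandIncl, LinearMap.sum_apply, LinearMap.comp_apply, LinearMap.proj_apply, map_sum,
    vecCoeff_vecMono]
  refine Finset.sum_eq_zero fun s _ => if_neg ?_
  rintro rfl
  exact ht s.2

theorem strandProj_strandIncl {sh : Fin n → G} {μ : G} [Fintype (StrandIdx w sh μ)]
    (x : StrandIdx w sh μ → R) : strandProj w sh μ (strandIncl w sh μ x) = x :=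
  funext fun t => vecCoeff_strandIncl x t

theorem strandProj_strandIncl_of_ne {sh : Fin n → G} {μ ν : G} [Fintype (StrandIdx w sh μ)]
    (h : ν ≠ μ) (x : StrandIdx w sh μ → R) : strandProj w sh ν (strandIncl w sh μ x) = 0 :=
  funext fun t => vecCoeff_strandIncl_of_ne x (by rw [t.2]; exact h)

theorem ext_strandProj {sh : Fin n → G} {u v : Fin n → MvPolynomial (Fin r) R}
    (h : ∀ μ, strandProj w sh μ u = strandProj w sh μ v) : u = v :=
  vec_ext fun t => congrFun (h _) (⟨t, rfl⟩ : StrandIdx w sh (Finsupp.weight w t.2 + sh t.1))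

variable (w) in
/-- The matrix of the degree-`μ` strand of the map `R[x]^n₁ → R[x]^n₀` given by `d`, in the
monomial bases. -/
noncomputable def strandMat {n₀ n₁ : ℕ} (sh₀ : Fin n₀ → G) (sh₁ : Fin n₁ → G)
    (d : Matrix (Fin n₀) (Fin n₁) (MvPolynomial (Fin r) R)) (μ : G) :
    Matrix (StrandIdx w sh₀ μ) (StrandIdx w sh₁ μ) R :=
  Matrix.of fun t s => coeff t.1.2 (d t.1.1 s.1.1 * monomial s.1.2 1)

theorem strandMat_map {R' : Type} [CommRing R'] (φ : R →+* R') {n₀ n₁ : ℕ} (sh₀ : Fin n₀ → G)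
    (sh₁ : Fin n₁ → G) (d : Matrix (Fin n₀) (Fin n₁) (MvPolynomial (Fin r) R)) (μ : G) :
    strandMat w sh₀ sh₁ (d.map (MvPolynomial.map φ)) μ = (strandMat w sh₀ sh₁ d μ).map φ := by
  ext t s
  simp only [strandMat, Matrix.of_apply, Matrix.map_apply, ← coeff_map, map_mul, map_monomial,
    map_one]

variable {n₀ n₁ n₂ : ℕ} {sh₀ : Fin n₀ → G} {sh₁ : Fin n₁ → G} {sh₂ : Fin n₂ → G}

theorem strandProj_mulVec {d : Matrix (Fin n₀) (Fin n₁) (MvPolynomial (Fin r) R)}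
    (hd : ∀ j k, IsWeightedHomogeneous w (d j k) (sh₁ k - sh₀ j)) (μ : G)
    [Fintype (StrandIdx w sh₁ μ)] (u : Fin n₁ → MvPolynomial (Fin r) R) :
    strandProj w sh₀ μ (d *ᵥ u) = strandMat w sh₀ sh₁ d μ *ᵥ strandProj w sh₁ μ u := by
  classical
  suffices h : strandProj w sh₀ μ ∘ₗ d.mulVecLin.restrictScalars R =
      (strandMat w sh₀ sh₁ d μ).mulVecLin ∘ₗ strandProj w sh₁ μ from LinearMap.congr_fun h u
  refine LinearMap.pi_ext' fun k => MvPolynomial.linearMap_ext fun a => LinearMap.ext_ring ?_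
  change strandProj w sh₀ μ (d *ᵥ Pi.single k (monomial a 1)) =
    strandMat w sh₀ sh₁ d μ *ᵥ strandProj w sh₁ μ (vecMono (k, a) 1)
  have hR : strandProj w sh₁ μ (vecMono (k, a) (1 : R)) =
      fun s => if (k, a) = s.1 then 1 else 0 := by
    funext s
    rw [strandProj_apply, vecCoeff_vecMono]
  rw [hR]
  funext t
  rw [strandProj_apply, vecCoeff_apply]
  have hL : (d *ᵥ Pi.single k (monomial a 1)) t.1.1 = d t.1.1 k * monomial a 1 := by
    simp [Matrix.mulVec, dotProduct_single]
  rw [hL]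
  simp only [Matrix.mulVec, dotProduct, mul_ite, mul_one, mul_zero]
  by_cases hk : Finsupp.weight w a + sh₁ k = μ
  · rw [Finset.sum_eq_single (⟨(k, a), hk⟩ : StrandIdx w sh₁ μ)]
    · simp [strandMat]
    · intro s _ hs
      rw [if_neg fun h => hs (Subtype.ext h.symm)]
    · simp
  · rw [Finset.sum_eq_zero fun s _ => if_neg ?_]
    · rw [coeff_mul_monomial']
      split_ifs with hle
      · rw [mul_one]
        by_contra hne
        have h1 := hd _ _ hne
        have h2 : Finsupp.weight w (t.1.2 - a) + Finsupp.weight w a = Finsupp.weight w t.1.2 := by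
          rw [← map_add, tsub_add_cancel_of_le hle]
        refine hk ?_
        rw [← t.2, ← h2, h1]
        abel
      · rfl
    · rintro h
      exact hk (by have := s.2; rw [← h] at this; exact this)

variable [∀ μ, Fintype (StrandIdx w sh₁ μ)] [∀ μ, Fintype (StrandIdx w sh₂ μ)]

theorem strandMat_mul_eq_zero {d₁ : Matrix (Fin n₀) (Fin n₁) (MvPolynomial (Fin r) R)}
    {d₂ : Matrix (Fin n₁) (Fin n₂) (MvPolynomial (Fin r) R)}
    (hd₁ : ∀ j k, IsWeightedHomogeneous w (d₁ j k) (sh₁ k - sh₀ j))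
    (hd₂ : ∀ j k, IsWeightedHomogeneous w (d₂ j k) (sh₂ k - sh₁ j)) (h : d₁ * d₂ = 0) (μ : G) :
    strandMat w sh₀ sh₁ d₁ μ * strandMat w sh₁ sh₂ d₂ μ = 0 := by
  classical
  refine Matrix.ext_of_mulVec_single fun i => ?_
  rw [← Matrix.mulVec_mulVec, ← strandProj_strandIncl (Pi.single i (1 : R)),
    ← strandProj_mulVec hd₂, ← strandProj_mulVec hd₁, Matrix.mulVec_mulVec, h]
  simp

variable [∀ μ, Fintype (StrandIdx w sh₀ μ)]

theorem mulVec_strandIncl {d : Matrix (Fin n₀) (Fin n₁) (MvPolynomial (Fin r) R)}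
    (hd : ∀ j k, IsWeightedHomogeneous w (d j k) (sh₁ k - sh₀ j)) (μ : G)
    (x : StrandIdx w sh₁ μ → R) :
    d *ᵥ strandIncl w sh₁ μ x = strandIncl w sh₀ μ (strandMat w sh₀ sh₁ d μ *ᵥ x) := by
  refine ext_strandProj (w := w) (sh := sh₀) fun ν => ?_
  rw [strandProj_mulVec hd]
  by_cases h : ν = μ
  · subst h
    rw [strandProj_strandIncl, strandProj_strandIncl]
  · rw [strandProj_strandIncl_of_ne h, strandProj_strandIncl_of_ne h, Matrix.mulVec_zero]

/-- If `c` kills the homology of `R[x]^n₂ → R[x]^n₁ → R[x]^n₀`, it kills that of each strand. -/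
theorem strand_exact_of_exact {d₁ : Matrix (Fin n₀) (Fin n₁) (MvPolynomial (Fin r) R)}
    {d₂ : Matrix (Fin n₁) (Fin n₂) (MvPolynomial (Fin r) R)}
    (hd₁ : ∀ j k, IsWeightedHomogeneous w (d₁ j k) (sh₁ k - sh₀ j))
    (hd₂ : ∀ j k, IsWeightedHomogeneous w (d₂ j k) (sh₂ k - sh₁ j)) (c : R)
    (h : ∀ v, d₁ *ᵥ v = 0 → ∃ u, d₂ *ᵥ u = c • v) (μ : G) (x : StrandIdx w sh₁ μ → R)
    (hx : strandMat w sh₀ sh₁ d₁ μ *ᵥ x = 0) : ∃ y, strandMat w sh₁ sh₂ d₂ μ *ᵥ y = c • x := by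
  obtain ⟨u, hu⟩ := h (strandIncl w sh₁ μ x) (by rw [mulVec_strandIncl hd₁, hx, map_zero])
  refine ⟨strandProj w sh₂ μ u, ?_⟩
  rw [← strandProj_mulVec hd₂, hu, map_smul, strandProj_strandIncl]

end Strands

/-! ### Division with remainder over a domain -/

section Leading

open scoped Matrix

variable {D : Type} [CommRing D] {r n : ℕ}

/-- The position of the monomial `x^t.2 • e_{t.1}` in the lexicographic term-over-position order on
the monomials of `D[x]^n`. -/
noncomputable def termKey (t : Fin n × (Fin r →₀ ℕ)) :
    (MonomialOrder.lex (σ := Fin r)).syn ×ₗ Fin n :=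
  toLex (MonomialOrder.lex.toSyn t.2, t.1)

theorem termKey_injective : Function.Injective (termKey (r := r) (n := n)) := by
  rintro ⟨i, a⟩ ⟨j, b⟩ h
  have h' := toLex.injective h
  simp only [Prod.mk.injEq, EmbeddingLike.apply_eq_iff_eq] at h'
  exact Prod.ext h'.2 h'.1

theorem termKey_add_le {i j : Fin n} {a b : Fin r →₀ ℕ} (h : termKey (i, a) ≤ termKey (j, b))
    (c : Fin r →₀ ℕ) : termKey (i, c + a) ≤ termKey (j, c + b) := by
  rw [termKey, termKey, Prod.Lex.toLex_le_toLex] at h ⊢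
  simpa using h

theorem wellFounded_termKey : WellFounded fun s t : Fin n × (Fin r →₀ ℕ) => termKey s < termKey t :=
  InvImage.wf termKey wellFounded_lt

/-- `t` is the leading monomial of the vector `v`. -/
def IsLead (v : Fin n → MvPolynomial (Fin r) D) (t : Fin n × (Fin r →₀ ℕ)) : Prop :=
  vecCoeff t v ≠ 0 ∧ ∀ s, vecCoeff s v ≠ 0 → termKey s ≤ termKey t

theorem exists_isLead {v : Fin n → MvPolynomial (Fin r) D} (hv : v ≠ 0) : ∃ t, IsLead v t := by
  have hne : {t | vecCoeff t v ≠ 0}.Nonempty := by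
    by_contra h
    rw [Set.not_nonempty_iff_eq_empty, Set.eq_empty_iff_forall_notMem] at h
    exact hv (vec_ext fun t => by simpa using h t)
  obtain ⟨t, ht, hmax⟩ := Set.exists_max_image _ termKey (finite_vecCoeff_ne_zero v) hne
  exact ⟨t, ht, hmax⟩

/-- Dickson's lemma for monomials in `D[x]^n`. -/
theorem exists_finite_dickson (L : Set (Fin n × (Fin r →₀ ℕ))) :
    ∃ B : Finset (Fin n × (Fin r →₀ ℕ)), ↑B ⊆ L ∧ ∀ t ∈ L, ∃ a, (t.1, a) ∈ B ∧ a ≤ t.2 := by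
  classical
  have hfin : ∀ j : Fin n, {a | Minimal (fun a => (j, a) ∈ L) a}.Finite := fun j =>
    WellQuasiOrderedLE.finite_of_isAntichain (setOfPred_minimal_antichain _)
  refine ⟨Finset.univ.biUnion fun j => (hfin j).toFinset.image (Prod.mk j), ?_, ?_⟩
  · rintro t ht
    simp only [Finset.coe_biUnion, Finset.coe_image, Set.mem_iUnion, Set.mem_image,
      Set.Finite.coe_toFinset, Set.mem_ofPred_eq] at ht
    obtain ⟨j, -, a, ha, rfl⟩ := ht
    exact ha.prop
  · rintro ⟨j, b⟩ ht
    obtain ⟨a, hab, ha⟩ := exists_minimal_le_of_wellFoundedLT (fun a => (j, a) ∈ L) b ht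
    refine ⟨a, ?_, hab⟩
    simp only [Finset.mem_biUnion, Finset.mem_image, Set.Finite.mem_toFinset, Set.mem_ofPred_eq]
    exact ⟨j, Finset.mem_univ _, a, ha, rfl⟩

theorem vecCoeff_monomial_smul (c : Fin r →₀ ℕ) (h : D) (g : Fin n → MvPolynomial (Fin r) D)
    (s : Fin n × (Fin r →₀ ℕ)) :
    vecCoeff s (monomial c h • g) = if c ≤ s.2 then h * vecCoeff (s.1, s.2 - c) g else 0 := by
  rw [vecCoeff_apply, Pi.smul_apply, smul_eq_mul, coeff_monomial_mul']
  rfl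

/-- Division with remainder by a submodule `N` of `D[x]^n`, after inverting one nonzero `f ∈ D`:
modulo `N`, every vector is, up to a power of `f`, a combination of the monomials outside the set
`L` of leading monomials of `N`, and no nonzero element of `N` is such a combination. The element
`f` is the product of the leading coefficients of a finite set of elements of `N` whose leading
monomials generate `L`. -/
theorem exists_division [IsDomain D]
    (N : Submodule (MvPolynomial (Fin r) D) (Fin n → MvPolynomial (Fin r) D)) :
    ∃ f : D, f ≠ 0 ∧ ∃ L : Set (Fin n × (Fin r →₀ ℕ)),
      (∀ v ∈ N, (∀ t ∈ L, vecCoeff t v = 0) → v = 0) ∧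
      ∀ v, ∃ k : ℕ, ∃ x ∈ N, ∃ b, (∀ t ∈ L, vecCoeff t b = 0) ∧ f ^ k • v = x + b := by
  classical
  let L : Set (Fin n × (Fin r →₀ ℕ)) := {t | ∃ v ∈ N, IsLead v t}
  obtain ⟨B, hBL, hB⟩ := exists_finite_dickson L
  choose! g hgN hg using fun t (ht : t ∈ L) => (show ∃ v ∈ N, IsLead v t from ht)
  let f : D := ∏ b ∈ B, vecCoeff b (g b)
  refine ⟨f, Finset.prod_ne_zero_iff.2 fun b hb => (hg b (hBL hb)).1, L, ?_, ?_⟩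
  · intro v hv h
    by_contra hne
    obtain ⟨t, ht⟩ := exists_isLead hne
    exact ht.1 (h t ⟨v, hv, ht⟩)
  let P : Submodule D (Fin n → MvPolynomial (Fin r) D) :=
    { carrier := {v | ∃ k : ℕ, ∃ x ∈ N, ∃ b, (∀ t ∈ L, vecCoeff t b = 0) ∧ f ^ k • v = x + b}
      zero_mem' := ⟨0, 0, N.zero_mem, 0, fun t _ => map_zero _, by simp⟩
      add_mem' := by
        rintro u v ⟨k, x, hx, b, hb, hu⟩ ⟨l, y, hy, c, hc, hv⟩
        refine ⟨k + l, f ^ l • x + f ^ k • y,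
          N.add_mem (N.smul_of_tower_mem _ hx) (N.smul_of_tower_mem _ hy),
          f ^ l • b + f ^ k • c, fun t ht => ?_, ?_⟩
        · rw [map_add, map_smul, map_smul, hb t ht, hc t ht]
          simp
        · have h1 : f ^ (k + l) • u = f ^ l • (x + b) := by rw [← hu, smul_smul, ← pow_add, add_comm]
          have h2 : f ^ (k + l) • v = f ^ k • (y + c) := by rw [← hv, smul_smul, ← pow_add]
          rw [smul_add, h1, h2, smul_add, smul_add]
          abel
      smul_mem' := by
        rintro a v ⟨k, x, hx, b, hb, hv⟩
        refine ⟨k, a • x, N.smul_of_tower_mem _ hx, a • b, fun t ht => ?_, ?_⟩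
        · rw [map_smul, hb t ht, smul_zero]
        · rw [smul_comm, hv, smul_add] }
  have hNP : ∀ v ∈ N, v ∈ P := fun v hv => ⟨0, v, hv, 0, fun t _ => map_zero _, by simp⟩
  have hfP : ∀ v, f • v ∈ P → v ∈ P := by
    rintro v ⟨k, x, hx, b, hb, hv⟩
    exact ⟨k + 1, x, hx, b, hb, by rw [pow_succ, mul_smul, hv]⟩
  have hsmul : ∀ (t : Fin n × (Fin r →₀ ℕ)) (c : D), vecMono t c = c • vecMono t (1 : D) := by
    intro t c
    rw [← map_smul, smul_eq_mul, mul_one]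
  suffices hP : ∀ t, vecMono t (1 : D) ∈ P from fun v =>
    vec_mem_of_vecMono_mem P v fun t _ => by
      rw [hsmul]
      exact P.smul_mem _ (hP t)
  intro t
  induction t using wellFounded_termKey.induction with
  | _ t ih =>
  by_cases ht : t ∈ L
  swap
  · refine ⟨0, 0, N.zero_mem, vecMono t 1, fun s hs => ?_, by simp⟩
    rw [vecCoeff_vecMono, if_neg]
    rintro rfl
    exact ht hs
  obtain ⟨a, haB, hat⟩ := hB t ht
  obtain ⟨h, hh⟩ : vecCoeff (t.1, a) (g (t.1, a)) ∣ f := Finset.dvd_prod_of_mem _ haB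
  have hlead := hg _ (hBL haB)
  set v' := monomial (t.2 - a) h • g (t.1, a) with hv'
  have hv'N : v' ∈ N := N.smul_mem _ (hgN _ (hBL haB))
  have hcoeff : vecCoeff t v' = f := by
    rw [hv', vecCoeff_monomial_smul, if_pos tsub_le_self, tsub_tsub_cancel_of_le hat, hh, mul_comm]
  have hle : ∀ s, vecCoeff s v' ≠ 0 → termKey s ≤ termKey t := by
    rintro ⟨i, b⟩ hs
    rw [hv', vecCoeff_monomial_smul] at hs
    split_ifs at hs with hcb
    · have := termKey_add_le (hlead.2 _ (right_ne_zero_of_mul hs)) (t.2 - a)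
      rwa [add_tsub_cancel_of_le hcb, tsub_add_cancel_of_le hat] at this
    · exact absurd rfl hs
  -- Subtracting the leading term leaves monomials covered by the induction hypothesis.
  have hu : v' - vecMono t f ∈ P := by
    refine vec_mem_of_vecMono_mem P _ fun s hs => ?_
    rw [hsmul]
    refine P.smul_mem _ (ih s ?_)
    have hst : t ≠ s := by
      rintro rfl
      rw [map_sub, hcoeff, vecCoeff_vecMono, if_pos rfl, sub_self] at hs
      exact hs rfl
    rw [map_sub, vecCoeff_vecMono, if_neg hst, sub_zero] at hs
    exact lt_of_le_of_ne (hle s hs) fun h => hst (termKey_injective h).symm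
  refine hfP _ ?_
  rw [← hsmul]
  simpa using P.sub_mem (hNP _ hv'N) hu

end Leading

/-! ### Generic exactness of the strands -/

section GenericExactness

open scoped Matrix

theorem exists_smul_mem_range_of_matExact_map {I₀ I₁ I₂ : Type} [Fintype I₀] [Fintype I₁]
    [Fintype I₂] {D K : Type} [CommRing D] [IsDomain D] [Field K] [Algebra D K] [IsFractionRing D K]
    {D₁ : Matrix I₀ I₁ D} {D₂ : Matrix I₁ I₂ D}
    (h : MatExact (D₁.map (algebraMap D K)) (D₂.map (algebraMap D K))) (x : I₁ → D)
    (hx : D₁ *ᵥ x = 0) : ∃ c : D, c ≠ 0 ∧ ∃ y, D₂ *ᵥ y = c • x := by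
  obtain ⟨u, hu⟩ := h (algebraMap D K ∘ x) (by
    funext i
    rw [← RingHom.map_mulVec, hx]
    simp)
  obtain ⟨b, hb⟩ := IsLocalization.exist_integer_multiples_of_finite (nonZeroDivisors D) u
  choose y hy using hb
  refine ⟨b, nonZeroDivisors.coe_ne_zero b, y, ?_⟩
  funext i
  refine IsFractionRing.injective D K ?_
  rw [RingHom.map_mulVec, show algebraMap D K ∘ y = (b : D) • u from funext hy, Matrix.mulVec_smul,
    hu]
  simp [Algebra.smul_def]

variable {D : Type} [CommRing D] {r n₀ n₁ n₂ : ℕ} {G : Type} [AddCommGroup G]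
  {w : Fin r → G} {sh₀ : Fin n₀ → G} {sh₁ : Fin n₁ → G} {sh₂ : Fin n₂ → G}

theorem exists_sum_strandIncl [∀ μ, Fintype (StrandIdx w sh₁ μ)]
    (v : Fin n₁ → MvPolynomial (Fin r) D) :
    ∃ s : Finset G, v = ∑ μ ∈ s, strandIncl w sh₁ μ (strandProj w sh₁ μ v) := by
  classical
  refine ⟨(finite_vecCoeff_ne_zero v).toFinset.image
    fun t => Finsupp.weight w t.2 + sh₁ t.1, vec_ext fun t => ?_⟩
  set ν := Finsupp.weight w t.2 + sh₁ t.1 with hν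
  have ht : ∀ μ, vecCoeff t (strandIncl w sh₁ μ (strandProj w sh₁ μ v)) =
      if ν = μ then vecCoeff t v else 0 := by
    intro μ
    split_ifs with h
    · subst h
      exact vecCoeff_strandIncl (strandProj w sh₁ ν v) (⟨t, rfl⟩ : StrandIdx w sh₁ ν)
    · exact vecCoeff_strandIncl_of_ne _ h
  rw [map_sum]
  simp only [ht]
  rw [Finset.sum_ite_eq]
  split_ifs with h
  · rfl
  · by_contra hne
    exact h (Finset.mem_image.2 ⟨t, by simpa using hne, rfl⟩)

variable [∀ μ, Fintype (StrandIdx w sh₀ μ)] [∀ μ, Fintype (StrandIdx w sh₁ μ)]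
  [∀ μ, Fintype (StrandIdx w sh₂ μ)]
  {d₁ : Matrix (Fin n₀) (Fin n₁) (MvPolynomial (Fin r) D)}
  {d₂ : Matrix (Fin n₁) (Fin n₂) (MvPolynomial (Fin r) D)}

/-- If all strands are exact over the fraction field of `D`, the homology of
`D[x]^n₂ → D[x]^n₁ → D[x]^n₀` is a torsion `D`-module; being finitely generated over `D[x]`, it is
killed by a single nonzero element of `D`. -/
theorem exists_smul_homology_eq_zero [IsDomain D] [IsNoetherianRing D] {K : Type} [Field K]
    [Algebra D K] [IsFractionRing D K]
    (hd₁ : ∀ j k, IsWeightedHomogeneous w (d₁ j k) (sh₁ k - sh₀ j))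
    (hd₂ : ∀ j k, IsWeightedHomogeneous w (d₂ j k) (sh₂ k - sh₁ j))
    (h : ∀ μ, MatExact ((strandMat w sh₀ sh₁ d₁ μ).map (algebraMap D K))
      ((strandMat w sh₁ sh₂ d₂ μ).map (algebraMap D K))) :
    ∃ f : D, f ≠ 0 ∧ ∀ v, d₁ *ᵥ v = 0 → ∃ u, d₂ *ᵥ u = f • v := by
  classical
  have key : ∀ v, d₁ *ᵥ v = 0 → ∃ c : D, c ≠ 0 ∧ ∃ u, d₂ *ᵥ u = c • v := by
    intro v hv
    have hμ : ∀ μ, ∃ c : D, c ≠ 0 ∧ ∃ u,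
        d₂ *ᵥ u = c • strandIncl w sh₁ μ (strandProj w sh₁ μ v) := by
      intro μ
      obtain ⟨c, hc, y, hy⟩ := exists_smul_mem_range_of_matExact_map (h μ) (strandProj w sh₁ μ v)
        (by rw [← strandProj_mulVec hd₁, hv, map_zero])
      exact ⟨c, hc, strandIncl w sh₂ μ y, by rw [mulVec_strandIncl hd₂, hy, map_smul]⟩
    choose c hc u hu using hμ
    obtain ⟨s, hs⟩ := exists_sum_strandIncl (w := w) (sh₁ := sh₁) v
    have hdvd : ∀ μ ∈ s, c μ ∣ ∏ μ ∈ s, c μ := fun μ hμ => Finset.dvd_prod_of_mem _ hμ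
    choose! e he using hdvd
    refine ⟨∏ μ ∈ s, c μ, Finset.prod_ne_zero_iff.2 fun μ _ => hc μ, ∑ μ ∈ s, e μ • u μ, ?_⟩
    rw [Matrix.mulVec_sum]
    conv_rhs => rw [hs, Finset.smul_sum]
    refine Finset.sum_congr rfl fun μ hμ => ?_
    rw [Matrix.mulVec_smul, hu, smul_smul, mul_comm, ← he μ hμ]
  obtain ⟨s, hs⟩ := IsNoetherian.noetherian (LinearMap.ker d₁.mulVecLin)
  have hsker : ∀ v ∈ s, d₁ *ᵥ v = 0 := fun v hv => by
    have : v ∈ LinearMap.ker d₁.mulVecLin := hs ▸ Submodule.subset_span hv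
    simpa using this
  choose! c hc u hu using key
  have hC : ∀ (a : D) (v : Fin n₁ → MvPolynomial (Fin r) D),
      (C a : MvPolynomial (Fin r) D) • v = a • v := fun a v => algebraMap_smul _ a v
  refine ⟨∏ v ∈ s, c v, Finset.prod_ne_zero_iff.2 fun v hv => hc v (hsker v hv), fun v hv => ?_⟩
  have hle : LinearMap.ker d₁.mulVecLin ≤ (LinearMap.range d₂.mulVecLin).comap
      (LinearMap.lsmul (MvPolynomial (Fin r) D) _ (C (∏ v ∈ s, c v))) := by
    rw [← hs, Submodule.span_le]
    intro x hx
    obtain ⟨e, he⟩ := Finset.dvd_prod_of_mem c hx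
    refine ⟨e • u x, ?_⟩
    rw [Matrix.mulVecLin_apply, Matrix.mulVec_smul, hu x (hsker x hx), smul_smul, mul_comm, ← he,
      LinearMap.lsmul_apply, hC]
  obtain ⟨y, hy⟩ := hle (show v ∈ LinearMap.ker d₁.mulVecLin by simpa using hv)
  rw [LinearMap.lsmul_apply, hC] at hy
  exact ⟨y, hy⟩

/-- Generic exactness: if all strands are exact over the fraction field of `D`, then they are all
exact over every field in which one suitable nonzero `f ∈ D` stays nonzero. -/
theorem exists_generic_matExact [IsDomain D] [IsNoetherianRing D] {K : Type} [Field K]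
    [Algebra D K] [IsFractionRing D K]
    (hd₁ : ∀ j k, IsWeightedHomogeneous w (d₁ j k) (sh₁ k - sh₀ j))
    (hd₂ : ∀ j k, IsWeightedHomogeneous w (d₂ j k) (sh₂ k - sh₁ j))
    (h : ∀ μ, MatExact ((strandMat w sh₀ sh₁ d₁ μ).map (algebraMap D K))
      ((strandMat w sh₁ sh₂ d₂ μ).map (algebraMap D K))) :
    ∃ f : D, f ≠ 0 ∧ ∀ (k : Type) [Field k] (φ : D →+* k), φ f ≠ 0 →
      ∀ μ, MatExact ((strandMat w sh₀ sh₁ d₁ μ).map φ) ((strandMat w sh₁ sh₂ d₂ μ).map φ) := by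
  classical
  obtain ⟨f₁, hf₁, L, hL, hdiv⟩ := exists_division (LinearMap.range d₁.mulVecLin)
  obtain ⟨f₂, hf₂, hann⟩ := exists_smul_homology_eq_zero hd₁ hd₂ h
  refine ⟨f₂ * f₁, mul_ne_zero hf₂ hf₁, fun k _ φ hφ μ => ?_⟩
  have hdiv' : ∃ N : ℕ, ∀ t : StrandIdx w sh₀ μ, ∃ u b, (∀ s ∈ L, vecCoeff s b = 0) ∧
      f₁ ^ N • vecMono t.1 (1 : D) = d₁ *ᵥ u + b := by
    choose e x hx b hb he using fun t : StrandIdx w sh₀ μ => hdiv (vecMono t.1 1)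
    choose u hu using hx
    refine ⟨∑ t, e t, fun t => ?_⟩
    obtain ⟨l, hl⟩ := Nat.exists_eq_add_of_le'
      (Finset.single_le_sum (f := e) (fun _ _ => Nat.zero_le _) (Finset.mem_univ t))
    refine ⟨f₁ ^ l • u t, f₁ ^ l • b t, fun s hs => by rw [map_smul, hb t s hs, smul_zero], ?_⟩
    rw [hl, pow_add, mul_smul, he, smul_add, Matrix.mulVec_smul, ← hu t]
    rfl
  obtain ⟨N, hN⟩ := hdiv'
  choose u b hb hub using hN
  let U := Fintype.linearCombination D u
  let B := Fintype.linearCombination D b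
  have hB : ∀ z, ∀ s ∈ L, vecCoeff s (B z) = 0 := by
    intro z s hs
    simp [B, Fintype.linearCombination_apply, hb _ s hs]
  have hUB : ∀ z, f₁ ^ N • strandIncl w sh₀ μ z = d₁ *ᵥ U z + B z := by
    intro z
    have hz : strandIncl w sh₀ μ z = ∑ t, z t • vecMono t.1 (1 : D) := by
      simp [strandIncl, ← map_smul]
    simp only [hz, U, B, Fintype.linearCombination_apply, Matrix.mulVec_sum, Matrix.mulVec_smul,
      Finset.smul_sum, ← Finset.sum_add_distrib, ← smul_add, ← hub]
    exact Finset.sum_congr rfl fun t _ => smul_comm _ _ _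
  set D₁ := strandMat w sh₀ sh₁ d₁ μ with hD₁
  set D₂ := strandMat w sh₁ sh₂ d₂ μ with hD₂
  let S := LinearMap.toMatrix' (strandProj w sh₁ μ ∘ₗ U)
  have hS : ∀ z, S *ᵥ z = strandProj w sh₁ μ (U z) := fun z => LinearMap.toMatrix'_mulVec _ _
  -- `S` inverts `D₁` on its image, up to `f₁ ^ N`, as the remainders avoid the monomials in `L`.
  have hSD : ∀ x, D₁ *ᵥ (f₁ ^ N • x - S *ᵥ (D₁ *ᵥ x)) = 0 := by
    intro x
    have h1 : D₁ *ᵥ (f₁ ^ N • x - S *ᵥ (D₁ *ᵥ x)) = strandProj w sh₀ μ (B (D₁ *ᵥ x)) := by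
      rw [Matrix.mulVec_sub, Matrix.mulVec_smul, hS, ← strandProj_mulVec hd₁,
        eq_sub_of_add_eq (hUB (D₁ *ᵥ x)).symm, map_sub, map_smul, strandProj_strandIncl,
        sub_sub_cancel]
    have h2 : strandIncl w sh₀ μ (D₁ *ᵥ (f₁ ^ N • x - S *ᵥ (D₁ *ᵥ x))) = 0 := by
      refine hL _ ⟨strandIncl w sh₁ μ (f₁ ^ N • x - S *ᵥ (D₁ *ᵥ x)), ?_⟩ fun t ht => ?_
      · rw [Matrix.mulVecLin_apply, mulVec_strandIncl hd₁]
      · rw [h1]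
        by_cases hμ : Finsupp.weight w t.2 + sh₀ t.1 = μ
        · exact (vecCoeff_strandIncl (strandProj w sh₀ μ (B (D₁ *ᵥ x)))
            (⟨t, hμ⟩ : StrandIdx w sh₀ μ)).trans (hB _ t ht)
        · exact vecCoeff_strandIncl_of_ne _ hμ
    rw [← strandProj_strandIncl (D₁ *ᵥ (f₁ ^ N • x - S *ᵥ (D₁ *ᵥ x))), h2, map_zero]
  obtain ⟨T, hT⟩ := exists_matrix_lift D₂
    (f₂ • (f₁ ^ N • LinearMap.id - S.mulVecLin ∘ₗ D₁.mulVecLin))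
    fun x => strand_exact_of_exact hd₁ hd₂ f₂ hann μ _ (hSD x)
  refine matExact_map_of_contraction φ (S := f₂ • S) (T := T) (c := f₂ * f₁ ^ N) ?_ ?_
  · refine Matrix.ext_of_mulVec_single fun i => ?_
    rw [Matrix.add_mulVec, ← Matrix.mulVec_mulVec _ D₂, hT, Matrix.smul_mul, Matrix.smul_mulVec,
      ← Matrix.mulVec_mulVec, Matrix.smul_mulVec, Matrix.one_mulVec, mul_smul]
    simp only [LinearMap.smul_apply, LinearMap.sub_apply, LinearMap.id_apply, LinearMap.comp_apply,
      Matrix.mulVecLin_apply, smul_sub, add_sub_cancel]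
  · rw [map_mul] at hφ
    rw [map_mul, map_pow]
    exact mul_ne_zero (left_ne_zero_of_mul hφ) (pow_ne_zero _ (right_ne_zero_of_mul hφ))

end GenericExactness

/-! ### Openness of intersections in Noetherian spectra -/

section Topology

variable {R : Type} [CommRing R]

open PrimeSpectrum in
/-- A form of Nagata's criterion: over a Noetherian ring, an intersection `U` of open sets is open
as soon as it contains, for each of its points `q`, a neighbourhood of `q` in the closure of `q`. -/
theorem isOpen_iInter_of_generic [IsNoetherianRing R] {ι : Type} (U : ι → Set (PrimeSpectrum R))
    (hU : ∀ i, IsOpen (U i))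
    (h : ∀ q ∈ ⋂ i, U i, ∃ f ∉ q.asIdeal, ∀ q' : PrimeSpectrum R, q ≤ q' → f ∉ q'.asIdeal →
      q' ∈ ⋂ i, U i) :
    IsOpen (⋂ i, U i) := by
  set Z : Set (PrimeSpectrum R) := (⋂ i, U i)ᶜ with hZ
  suffices hI : ∀ I : Ideal R, IsClosed (Z ∩ zeroLocus I) by
    have h0 := hI ⊥
    rw [show zeroLocus ((⊥ : Ideal R) : Set R) = Set.univ from zeroLocus_bot, Set.inter_univ] at h0
    exact isClosed_compl_iff.1 h0
  intro I
  induction I using IsNoetherian.induction with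
  | hgt I ih =>
  -- It is enough to cut `Z ∩ V(I)` down to a closed set on which strictly larger ideals apply.
  have hsup : ∀ a : R, a ∉ I → I < I ⊔ Ideal.span {a} := fun a ha =>
    left_lt_sup.2 fun hle => ha (hle (Ideal.mem_span_singleton_self a))
  have hmem : ∀ (a : R) (q : PrimeSpectrum R),
      q ∈ zeroLocus ((I ⊔ Ideal.span {a} : Ideal R) : Set R) ↔
        q ∈ zeroLocus (I : Set R) ∧ a ∈ q.asIdeal := by
    intro a q
    simp only [mem_zeroLocus, SetLike.coe_subset_coe, sup_le_iff, Ideal.span_singleton_le_iff_mem]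
  by_cases htop : I = ⊤
  · rw [htop]
    simp
  by_cases hprime : Ideal.IsPrime I
  swap
  · obtain ⟨a, ha, b, hb, hab⟩ := (Ideal.not_isPrime_iff.1 hprime).resolve_left htop
    have : Z ∩ zeroLocus (I : Set R) =
        (Z ∩ zeroLocus ((I ⊔ Ideal.span {a} : Ideal R) : Set R)) ∪
        (Z ∩ zeroLocus ((I ⊔ Ideal.span {b} : Ideal R) : Set R)) := by
      ext q
      simp only [Set.mem_inter_iff, Set.mem_union, hmem]
      constructor
      · rintro ⟨hqZ, hq⟩
        rcases q.2.mem_or_mem (hq hab) with h1 | h1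
        · exact Or.inl ⟨hqZ, hq, h1⟩
        · exact Or.inr ⟨hqZ, hq, h1⟩
      · rintro (⟨h1, h2, -⟩ | ⟨h1, h2, -⟩) <;> exact ⟨h1, h2⟩
    rw [this]
    exact (ih _ (hsup a ha)).union (ih _ (hsup b hb))
  let q : PrimeSpectrum R := ⟨I, hprime⟩
  by_cases hq : q ∈ ⋂ i, U i
  · obtain ⟨f, hf, hfU⟩ := h q hq
    have : Z ∩ zeroLocus (I : Set R) = Z ∩ zeroLocus ((I ⊔ Ideal.span {f} : Ideal R) : Set R) := by
      ext q'
      simp only [Set.mem_inter_iff, hmem]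
      refine ⟨fun ⟨h1, h2⟩ => ⟨h1, h2, ?_⟩, fun ⟨h1, h2, _⟩ => ⟨h1, h2⟩⟩
      by_contra hne
      exact h1 (hfU q' h2 hne)
    rw [this]
    exact ih _ (hsup f hf)
  · -- Each open `U i` is stable under generization, so `q ∉ U i` propagates to all of `V(q)`.
    have : Z ∩ zeroLocus (I : Set R) = zeroLocus (I : Set R) := by
      refine Set.inter_eq_right.2 fun q' hq' hq'U => hq ?_
      rw [Set.mem_iInter] at hq'U ⊢
      exact fun i => ((le_iff_specializes q q').1 hq').mem_open (hU i) (hq'U i)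
    rw [this]
    exact isClosed_zeroLocus _

end Topology

/-! ### The strands of the resolution -/

section Assembly

open scoped Matrix

variable {r n₀ n₁ n₂ : ℕ} {G : Type} [AddCommGroup G] {w : Fin r → G}
  {sh₀ : Fin n₀ → G} {sh₁ : Fin n₁ → G} {sh₂ : Fin n₂ → G}

/-- The set of primes over whose residue field every strand of a complex
`R[x]^n₂ → R[x]^n₁ → R[x]^n₀` is exact is open when `R` is Noetherian. -/
theorem isOpen_forall_strand_exact [∀ μ, Fintype (StrandIdx w sh₀ μ)]
    [∀ μ, Fintype (StrandIdx w sh₁ μ)] [∀ μ, Fintype (StrandIdx w sh₂ μ)]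
    {R : Type} [CommRing R] [IsNoetherianRing R]
    {d₁ : Matrix (Fin n₀) (Fin n₁) (MvPolynomial (Fin r) R)}
    {d₂ : Matrix (Fin n₁) (Fin n₂) (MvPolynomial (Fin r) R)}
    (hd₁ : ∀ j k, IsWeightedHomogeneous w (d₁ j k) (sh₁ k - sh₀ j))
    (hd₂ : ∀ j k, IsWeightedHomogeneous w (d₂ j k) (sh₂ k - sh₁ j)) (hd : d₁ * d₂ = 0) :
    IsOpen {q : PrimeSpectrum R | ∀ μ,
      MatExact ((strandMat w sh₀ sh₁ d₁ μ).map (algebraMap R q.asIdeal.ResidueField))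
        ((strandMat w sh₁ sh₂ d₂ μ).map (algebraMap R q.asIdeal.ResidueField))} := by
  classical
  let U : G → Set (PrimeSpectrum R) := fun μ => {q |
    MatExact ((strandMat w sh₀ sh₁ d₁ μ).map (algebraMap R q.asIdeal.ResidueField))
      ((strandMat w sh₁ sh₂ d₂ μ).map (algebraMap R q.asIdeal.ResidueField))}
  have hU : ∀ q, q ∈ ⋂ μ, U μ ↔ ∀ μ, q ∈ U μ := fun q => Set.mem_iInter
  rw [show {q : PrimeSpectrum R | ∀ μ,
      MatExact ((strandMat w sh₀ sh₁ d₁ μ).map (algebraMap R q.asIdeal.ResidueField))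
        ((strandMat w sh₁ sh₂ d₂ μ).map (algebraMap R q.asIdeal.ResidueField))} = ⋂ μ, U μ from
    Set.ext fun q => (hU q).symm]
  refine isOpen_iInter_of_generic U
    (fun μ => isOpen_matExact (strandMat_mul_eq_zero hd₁ hd₂ hd μ)) fun q hq => ?_
  rw [hU] at hq
  let π := Ideal.Quotient.mk q.asIdeal
  -- The strands over `R ⧸ q`, seen in a field `k`.
  have hmap : ∀ {k : Type} [Field k] (φ : R ⧸ q.asIdeal →+* k) {m n : ℕ} (s : Fin m → G)
      (s' : Fin n → G) (d : Matrix (Fin m) (Fin n) (MvPolynomial (Fin r) R)) (μ : G),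
      (strandMat w s s' (d.map (MvPolynomial.map π)) μ).map φ =
        (strandMat w s s' d μ).map (φ.comp π) := by
    intro k _ φ m n s s' d μ
    rw [strandMat_map, Matrix.map_map]
    rfl
  have hπ : ∀ {e : MvPolynomial (Fin r) R} {g : G}, IsWeightedHomogeneous w e g →
      IsWeightedHomogeneous w (MvPolynomial.map π e) g := by
    intro e g h a ha
    refine h fun h0 => ha ?_
    rw [coeff_map, h0, map_zero]
  obtain ⟨f, hf, hgen⟩ := exists_generic_matExact (K := q.asIdeal.ResidueField)
    (d₁ := d₁.map (MvPolynomial.map π)) (d₂ := d₂.map (MvPolynomial.map π))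
    (fun j k => hπ (hd₁ j k)) (fun j k => hπ (hd₂ j k)) fun μ => by
      rw [hmap, hmap]
      exact hq μ
  obtain ⟨f, rfl⟩ := Ideal.Quotient.mk_surjective f
  refine ⟨f, fun h => hf (Ideal.Quotient.eq_zero_iff_mem.2 h), fun q' hqq' hfq' => ?_⟩
  rw [hU]
  intro μ
  let φ : R ⧸ q.asIdeal →+* q'.asIdeal.ResidueField := Ideal.Quotient.lift q.asIdeal
    (algebraMap R q'.asIdeal.ResidueField)
    fun a ha => Ideal.algebraMap_residueField_eq_zero.2 (hqq' ha)
  have := hgen q'.asIdeal.ResidueField φ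
    (fun h => hfq' (Ideal.algebraMap_residueField_eq_zero.1 h)) μ
  rw [hmap, hmap] at this
  exact this

/-- A matrix of polynomials descends to any subring containing all its coefficients. -/
theorem exists_map_subtype_eq {A : Type} [CommRing A] (B : Subring A) {m n : ℕ}
    (d : Matrix (Fin m) (Fin n) (MvPolynomial (Fin r) A))
    (h : ∀ j k, ((d j k).coeffs : Set A) ⊆ B) :
    ∃ d' : Matrix (Fin m) (Fin n) (MvPolynomial (Fin r) B),
      d'.map (MvPolynomial.map B.subtype) = d := by
  have h' : ∀ j k, ∃ e : MvPolynomial (Fin r) B, MvPolynomial.map B.subtype e = d j k :=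
    fun j k => mem_range_map_iff_coeffs_subset.2 (by simpa using h j k)
  choose e he using h'
  exact ⟨Matrix.of e, Matrix.ext he⟩

/-- The openness of `isOpen_forall_strand_exact` holds over every ring, by descent to the
(Noetherian) subring generated by the coefficients of the complex. -/
theorem isOpen_forall_strand_exact' [∀ μ, Fintype (StrandIdx w sh₀ μ)]
    [∀ μ, Fintype (StrandIdx w sh₁ μ)] [∀ μ, Fintype (StrandIdx w sh₂ μ)]
    {A : Type} [CommRing A]
    {d₁ : Matrix (Fin n₀) (Fin n₁) (MvPolynomial (Fin r) A)}
    {d₂ : Matrix (Fin n₁) (Fin n₂) (MvPolynomial (Fin r) A)}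
    (hd₁ : ∀ j k, IsWeightedHomogeneous w (d₁ j k) (sh₁ k - sh₀ j))
    (hd₂ : ∀ j k, IsWeightedHomogeneous w (d₂ j k) (sh₂ k - sh₁ j)) (hd : d₁ * d₂ = 0) :
    IsOpen {p : PrimeSpectrum A | ∀ μ,
      MatExact ((strandMat w sh₀ sh₁ d₁ μ).map (algebraMap A p.asIdeal.ResidueField))
        ((strandMat w sh₁ sh₂ d₂ μ).map (algebraMap A p.asIdeal.ResidueField))} := by
  classical
  obtain ⟨B, _, hB₁, hB₂⟩ : ∃ B : Subring A, IsNoetherianRing B ∧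
      (∀ j k, ((d₁ j k).coeffs : Set A) ⊆ B) ∧ ∀ j k, ((d₂ j k).coeffs : Set A) ⊆ B := by
    refine ⟨Subring.closure ((⋃ j, ⋃ k, (d₁ j k).coeffs) ∪ ⋃ j, ⋃ k, (d₂ j k).coeffs),
      is_noetherian_subring_closure _ (Set.Finite.union ?_ ?_), fun j k a ha => ?_,
      fun j k a ha => ?_⟩
    · exact Set.finite_iUnion fun j => Set.finite_iUnion fun k => Finset.finite_toSet _
    · exact Set.finite_iUnion fun j => Set.finite_iUnion fun k => Finset.finite_toSet _
    · exact Subring.subset_closure (Or.inl (Set.mem_iUnion₂.2 ⟨j, k, ha⟩))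
    · exact Subring.subset_closure (Or.inr (Set.mem_iUnion₂.2 ⟨j, k, ha⟩))
  obtain ⟨e₁, rfl⟩ := exists_map_subtype_eq B d₁ hB₁
  obtain ⟨e₂, rfl⟩ := exists_map_subtype_eq B d₂ hB₂
  have hinj : Function.Injective (MvPolynomial.map (σ := Fin r) B.subtype) :=
    map_injective _ B.subtype_injective
  have hhom : ∀ {e : MvPolynomial (Fin r) B} {g : G},
      IsWeightedHomogeneous w (MvPolynomial.map B.subtype e) g → IsWeightedHomogeneous w e g := by
    intro e g h a ha
    refine h ?_
    rw [coeff_map]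
    exact fun h0 => ha (B.subtype_injective (h0.trans (map_zero _).symm))
  have he : e₁ * e₂ = 0 := by
    rw [← Matrix.map_mul] at hd
    refine Matrix.ext fun i j => hinj ?_
    rw [show MvPolynomial.map B.subtype ((e₁ * e₂) i j) = 0 from congrFun (congrFun hd i) j]
    simp
  have hopen := isOpen_forall_strand_exact (fun j k => hhom (hd₁ j k)) (fun j k => hhom (hd₂ j k)) he
  refine (congrArg IsOpen (Set.ext fun p => ?_)).mp
    (hopen.preimage (PrimeSpectrum.continuous_comap B.subtype))
  refine forall_congr' fun μ => ?_
  rw [strandMat_map, strandMat_map]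
  exact (matExact_residueField_comap_iff B.subtype p.asIdeal).symm

variable (w) in
theorem strandIncl_mem {A : Type} [CommRing A] (sh : Fin n₀ → G) (μ : G)
    [Fintype (StrandIdx w sh μ)] (x : StrandIdx w sh μ → A) :
    strandIncl w sh μ x ∈ gradedFreeStrand A r w n₀ sh μ := by
  intro j _ a ha
  by_contra h
  exact ha (vecCoeff_strandIncl_of_ne x (t := (j, a)) fun h' => h (eq_sub_of_add_eq h'))

variable (w) in
theorem strandIncl_strandProj {A : Type} [CommRing A] (sh : Fin n₀ → G) (μ : G)
    [Fintype (StrandIdx w sh μ)] {v : Fin n₀ → MvPolynomial (Fin r) A}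
    (hv : v ∈ gradedFreeStrand A r w n₀ sh μ) :
    strandIncl w sh μ (strandProj w sh μ v) = v := by
  refine vec_ext fun t => ?_
  by_cases ht : Finsupp.weight w t.2 + sh t.1 = μ
  · exact vecCoeff_strandIncl (strandProj w sh μ v) (⟨t, ht⟩ : StrandIdx w sh μ)
  · rw [vecCoeff_strandIncl_of_ne _ ht]
    by_contra h
    have : Finsupp.weight w t.2 = μ - sh t.1 := hv t.1 trivial (Ne.symm h)
    exact ht (by rw [this, sub_add_cancel])

/-- `A^(StrandIdx 0 μ) → [H₀(F)]_μ`, presenting `[H₀(F)]_μ` as the cokernel of the degree-`μ`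
strand of the differential. -/
noncomputable def gradingPresentation {A : Type} [CommRing A] (F : GradedFreeComplex A G r w)
    (μ : G) [Fintype (StrandIdx w (F.shift 0) μ)] :
    (StrandIdx w (F.shift 0) μ → A) →ₗ[A] F.H0grading μ :=
  (((LinearMap.range (F.diff 0)).mkQ.restrictScalars A) ∘ₗ strandIncl w (F.shift 0) μ).codRestrict
    (F.H0grading μ) fun x => ⟨_, strandIncl_mem w _ μ x, rfl⟩

theorem gradingPresentation_surjective {A : Type} [CommRing A] (F : GradedFreeComplex A G r w)
    (μ : G) [Fintype (StrandIdx w (F.shift 0) μ)] :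
    Function.Surjective (gradingPresentation F μ) := by
  rintro ⟨_, v, hv, rfl⟩
  refine ⟨strandProj w (F.shift 0) μ v, Subtype.ext ?_⟩
  change (LinearMap.range (F.diff 0)).mkQ
    (strandIncl w (F.shift 0) μ (strandProj w (F.shift 0) μ v)) = _
  rw [strandIncl_strandProj w _ μ hv]
  rfl

theorem gradingPresentation_eq_zero_iff {A : Type} [CommRing A] (F : GradedFreeComplex A G r w)
    (μ : G) [∀ μ, Fintype (StrandIdx w (F.shift 0) μ)]
    [∀ μ, Fintype (StrandIdx w (F.shift (0 + 1)) μ)] (v : StrandIdx w (F.shift 0) μ → A) :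
    gradingPresentation F μ v = 0 ↔
      ∃ u, strandMat w (F.shift 0) (F.shift (0 + 1)) (F.d 0) μ *ᵥ u = v := by
  have h : gradingPresentation F μ v = 0 ↔
      strandIncl w (F.shift 0) μ v ∈ LinearMap.range (F.diff 0) := by
    rw [← Submodule.Quotient.mk_eq_zero, ← Subtype.coe_inj]
    rfl
  rw [h]
  constructor
  · rintro ⟨u, hu⟩
    refine ⟨strandProj w (F.shift (0 + 1)) μ u, ?_⟩
    rw [← strandProj_mulVec (F.d_homog 0)]
    exact (congrArg _ hu).trans (strandProj_strandIncl v)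
  · rintro ⟨u, rfl⟩
    exact ⟨strandIncl w (F.shift (0 + 1)) μ u, mulVec_strandIncl (F.d_homog 0) μ u⟩

end Assembly

theorem isOpen_free_locus_of_graded_components
    (A : Type) [CommRing A]
    (hloc : ∀ p : PrimeSpectrum A, IsNoetherianRing (Localization.AtPrime p.asIdeal))
    (G : Type) [AddCommGroup G] [DecidableEq G]
    (r : ℕ) (w : Fin r → G) (ψ : G →+ ℤ) (hψ : ∀ i, 0 < ψ (w i))
    (F : GradedFreeComplex A G r w)
    (hbot : ∀ i : ℤ, i < 0 → F.rank i = 0)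
    (hexact : ∀ j : ℤ, 0 ≤ j →
      LinearMap.ker (F.diff j) ≤ LinearMap.range (F.diff (j + 1))) :
    IsOpen {p : PrimeSpectrum A | ∀ μ : G,
      Module.Free (Localization.AtPrime p.asIdeal)
        (LocalizedModule p.asIdeal.primeCompl ↥(F.H0grading μ))} := by
  classical
  have hfin : ∀ {n : ℕ} (sh : Fin n → G) (μ : G), Fintype (StrandIdx w sh μ) := fun sh μ =>
    haveI := finite_strandIdx w ψ hψ sh μ
    Fintype.ofFinite _
  let := hfin (F.shift 0)
  let := hfin (F.shift (0 + 1))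
  let := hfin (F.shift (0 + 1 + 1))
  convert isOpen_forall_strand_exact' (F.d_homog 0) (F.d_homog (0 + 1)) (F.d_comp 0) using 1
  ext p
  refine forall_congr' fun μ => ?_
  refine free_localized_iff p.asIdeal
    (strandMat_mul_eq_zero (F.d_homog 0) (F.d_homog (0 + 1)) (F.d_comp 0) μ) (fun v hv => ?_)
    (gradingPresentation F μ) (gradingPresentation_surjective F μ)
    (gradingPresentation_eq_zero_iff F μ)
  have hex : ∀ v, (F.d 0).mulVec v = 0 → ∃ u, (F.d (0 + 1)).mulVec u = (1 : A) • v := by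
    intro v hv
    obtain ⟨u, hu⟩ := hexact 0 le_rfl (show v ∈ LinearMap.ker (F.diff 0) from hv)
    exact ⟨u, hu.trans (one_smul A v).symm⟩
  obtain ⟨y, hy⟩ := strand_exact_of_exact (F.d_homog 0) (F.d_homog (0 + 1)) 1 hex μ v hv
  exact ⟨y, hy.trans (one_smul A v)⟩
end

section
/- Assume A is Noetherian. Let P_• be a chain complex of finitely generated graded R-modules with P_i = 0 for i < 0. Fix an integer s ≥ 0 and a prime p ∈ Spec(A) not belonging to ∪_{i=0}^{s} (T_{P_i} ∪ T_{H_i(P_•)}). Then for any A_p-module N and every 0 ≤ i ≤ s there is an isomorphism H_i(P_• ⊗_{A_p} N) ≅ H_i(P_•) ⊗_{A_p} N, where P_• ⊗_{A_p} N denotes (P_• ⊗_A A_p) ⊗_{A_p} N. -/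
/-!
Write `L = A_p`. Graded pieces that become free over `L` make the whole module flat after base
change to `L`, because the module is the direct sum of its pieces (`flat_of_inFreeLocus`). For the
homology this requires the induced pieces to form a direct sum decomposition, which holds because
the kernels and images of graded maps are homogeneous (`isInternal_of_homogeneous`).

Call `M` *`L`-flat* if `L ⊗[A] M` is flat over `L`, and put `C_i = P_i / im (P_{i+1} → P_i)`.
The exact sequences `0 → im (d j) → P_j → C_j → 0` and
`0 → H_{j+1} → C_{j+1} → im (d j) → 0` show by induction, starting from `P_{-1} = 0`, that every
`C_i` with `i ≤ s` is `L`-flat. Hence `im (d j)` and `C_j` are `L`-flat, so tensoring with an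
`L`-module `N` keeps both `ker (d j) → P_{j+1}` and `im (d j) → P_j` injective
(`lTensor_injective_of_flat_baseChange`). Consequently `ker (d j) ⊗ N` is the kernel of `d j ⊗ N`,
and right exactness of the tensor product identifies the homology of the tensored complex with
`H_{j+1} ⊗ N` (`nonempty_homology_equiv`).
-/

open MvPolynomial TensorProduct

/-- The homology module `ker f / im g` of a composable pair. -/
abbrev ModuleHomology {S K M N : Type} [CommRing S] [AddCommGroup K] [AddCommGroup M]
    [AddCommGroup N] [Module S K] [Module S M] [Module S N]
    (g : K →ₗ[S] M) (f : M →ₗ[S] N) : Type :=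
  ↥(LinearMap.ker f) ⧸ (LinearMap.range g).comap (LinearMap.ker f).subtype

/-- `p` belongs to the free locus `U` of a `G`-graded module with grading `ℳ`:
all graded components become free after localization at `p`.
(`T = Spec A \ U` is the complement.) -/
def InFreeLocus {A M : Type} [CommRing A] [AddCommGroup M] [Module A M] {G : Type}
    (ℳ : G → Submodule A M) (p : PrimeSpectrum A) : Prop :=
  ∀ μ : G, Module.Free (Localization.AtPrime p.asIdeal)
    (LocalizedModule p.asIdeal.primeCompl ↥(ℳ μ))

/-! ### Flatness after base change -/

section Flatness

/-- The kernel of a surjection between flat modules is flat. -/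
lemma flat_of_exact_left {S M₁ M₂ M₃ : Type} [CommRing S] [AddCommGroup M₁] [AddCommGroup M₂]
    [AddCommGroup M₃] [Module S M₁] [Module S M₂] [Module S M₃]
    (f : M₁ →ₗ[S] M₂) (g : M₂ →ₗ[S] M₃) (hf : Function.Injective f)
    (hg : Function.Surjective g) (h : Function.Exact f g)
    [Module.Flat S M₂] [Module.Flat S M₃] : Module.Flat S M₁ := by
  rw [Module.Flat.iff_lTensor_preserves_injective_linearMap]
  intro X Y _ _ _ _ u hu
  have h1 := (LinearMap.lTensor_inj_iff_rTensor_inj X f).1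
    (LinearMap.lTensor_injective_of_exact_of_flat g hg f hf h X)
  have h2 := Module.Flat.lTensor_preserves_injective_linearMap (M := M₂) u hu
  have e : (f.rTensor Y) ∘ₗ (u.lTensor M₁) = (u.lTensor M₂) ∘ₗ (f.rTensor X) := by
    rw [LinearMap.rTensor_comp_lTensor, LinearMap.lTensor_comp_rTensor]
  have h3 : Function.Injective ((f.rTensor Y) ∘ₗ (u.lTensor M₁)) := by
    rw [e]; exact h2.comp h1
  exact Function.Injective.of_comp (f := f.rTensor Y) h3

/-- An extension of flat modules is flat. -/
lemma flat_of_exact_middle {S M₁ M₂ M₃ : Type} [CommRing S] [AddCommGroup M₁] [AddCommGroup M₂]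
    [AddCommGroup M₃] [Module S M₁] [Module S M₂] [Module S M₃]
    (f : M₁ →ₗ[S] M₂) (g : M₂ →ₗ[S] M₃) (hf : Function.Injective f)
    (hg : Function.Surjective g) (h : Function.Exact f g)
    [Module.Flat S M₁] [Module.Flat S M₃] : Module.Flat S M₂ := by
  rw [Module.Flat.iff_lTensor_preserves_injective_linearMap]
  intro X Y _ _ _ _ u hu
  have h1 := (LinearMap.lTensor_inj_iff_rTensor_inj Y f).1
    (LinearMap.lTensor_injective_of_exact_of_flat g hg f hf h Y)
  have h2 := Module.Flat.lTensor_preserves_injective_linearMap (M := M₁) u hu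
  have h3 := Module.Flat.lTensor_preserves_injective_linearMap (M := M₃) u hu
  have ef : (f.rTensor Y) ∘ₗ (u.lTensor M₁) = (u.lTensor M₂) ∘ₗ (f.rTensor X) := by
    rw [LinearMap.rTensor_comp_lTensor, LinearMap.lTensor_comp_rTensor]
  have eg : (g.rTensor Y) ∘ₗ (u.lTensor M₂) = (u.lTensor M₃) ∘ₗ (g.rTensor X) := by
    rw [LinearMap.rTensor_comp_lTensor, LinearMap.lTensor_comp_rTensor]
  rw [injective_iff_map_eq_zero]
  intro x hx
  have hx3 : g.rTensor X x = 0 := by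
    apply h3
    have := LinearMap.congr_fun eg x
    simp only [LinearMap.comp_apply, hx, map_zero] at this
    rw [← this, map_zero]
  obtain ⟨y, rfl⟩ := (rTensor_exact X h hg x).1 hx3
  have hy : y = 0 := by
    apply h2
    apply h1
    have := LinearMap.congr_fun ef y
    simp only [LinearMap.comp_apply, hx] at this
    rw [this, map_zero, map_zero]
  rw [hy, map_zero]

variable {A L M₁ M₂ M₃ : Type} [CommRing A] [CommRing L] [Algebra A L]
  [AddCommGroup M₁] [AddCommGroup M₂] [AddCommGroup M₃] [Module A M₁] [Module A M₂] [Module A M₃]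

lemma baseChange_flat_of_exact_left [Module.Flat A L]
    (f : M₁ →ₗ[A] M₂) (g : M₂ →ₗ[A] M₃) (hf : Function.Injective f)
    (hg : Function.Surjective g) (h : Function.Exact f g)
    (h2 : Module.Flat L (L ⊗[A] M₂)) (h3 : Module.Flat L (L ⊗[A] M₃)) :
    Module.Flat L (L ⊗[A] M₁) :=
  flat_of_exact_left (f.baseChange L) (g.baseChange L)
    (Module.Flat.lTensor_preserves_injective_linearMap (M := L) f hf)
    (LinearMap.lTensor_surjective L hg) (lTensor_exact L h hg)

lemma baseChange_flat_of_exact_middle [Module.Flat A L]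
    (f : M₁ →ₗ[A] M₂) (g : M₂ →ₗ[A] M₃) (hf : Function.Injective f)
    (hg : Function.Surjective g) (h : Function.Exact f g)
    (h1 : Module.Flat L (L ⊗[A] M₁)) (h3 : Module.Flat L (L ⊗[A] M₃)) :
    Module.Flat L (L ⊗[A] M₂) :=
  flat_of_exact_middle (f.baseChange L) (g.baseChange L)
    (Module.Flat.lTensor_preserves_injective_linearMap (M := L) f hf)
    (LinearMap.lTensor_surjective L hg) (lTensor_exact L h hg)

/-- If the cokernel of an injection becomes flat over the flat `A`-algebra `L`, the injection stays
injective after tensoring with any `L`-module: `N ⊗[A] M = N ⊗[L] (L ⊗[A] M)`. -/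
lemma lTensor_injective_of_flat_baseChange [Module.Flat A L]
    (f : M₁ →ₗ[A] M₂) (g : M₂ →ₗ[A] M₃) (hf : Function.Injective f)
    (hg : Function.Surjective g) (h : Function.Exact f g)
    (h3 : Module.Flat L (L ⊗[A] M₃))
    (N : Type) [AddCommGroup N] [Module A N] [Module L N] [IsScalarTower A L N] :
    Function.Injective (f.lTensor N) := by
  have key := LinearMap.lTensor_injective_of_exact_of_flat (g.baseChange L)
    (LinearMap.lTensor_surjective L hg) (f.baseChange L)
    (Module.Flat.lTensor_preserves_injective_linearMap (M := L) f hf) (lTensor_exact L h hg) N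
  have e := AlgebraTensorModule.lTensor_comp_cancelBaseChange A L L (M := N) f
  have h4 : Function.Injective ((AlgebraTensorModule.lTensor L N f) ∘ₗ
      (AlgebraTensorModule.cancelBaseChange A L L N M₁).toLinearMap) := by
    rw [e]
    exact (AlgebraTensorModule.cancelBaseChange A L L N M₂).injective.comp key
  rw [LinearMap.coe_comp, LinearEquiv.coe_coe, EquivLike.injective_comp] at h4
  exact h4

lemma rTensor_injective_of_flat_baseChange [Module.Flat A L]
    (f : M₁ →ₗ[A] M₂) (g : M₂ →ₗ[A] M₃) (hf : Function.Injective f)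
    (hg : Function.Surjective g) (h : Function.Exact f g)
    (h3 : Module.Flat L (L ⊗[A] M₃))
    (N : Type) [AddCommGroup N] [Module A N] [Module L N] [IsScalarTower A L N] :
    Function.Injective (f.rTensor N) :=
  (LinearMap.lTensor_inj_iff_rTensor_inj N f).1
    (lTensor_injective_of_flat_baseChange f g hf hg h h3 N)

end Flatness

/-! ### Graded modules -/

section Graded

variable {A G : Type} [CommRing A] [DecidableEq G]

lemma flat_of_inFreeLocus {M : Type} [AddCommGroup M] [Module A M] (ℳ : G → Submodule A M)
    (hℳ : DirectSum.IsInternal ℳ) (p : PrimeSpectrum A) (h : InFreeLocus ℳ p) :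
    Module.Flat (Localization.AtPrime p.asIdeal) (Localization.AtPrime p.asIdeal ⊗[A] M) := by
  have h1 (μ : G) : Module.Flat (Localization.AtPrime p.asIdeal)
      (Localization.AtPrime p.asIdeal ⊗[A] ℳ μ) := by
    have := h μ
    exact Module.Flat.of_linearEquiv
      (LocalizedModule.equivTensorProduct p.asIdeal.primeCompl (ℳ μ)).symm
  let e : (DirectSum G fun μ => ℳ μ) ≃ₗ[A] M := LinearEquiv.ofBijective
    (DirectSum.coeLinearMap ℳ) hℳ
  exact Module.Flat.of_linearEquiv ((e.symm.baseChange A (Localization.AtPrime p.asIdeal) _ _).trans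
    (TensorProduct.directSumRight A (Localization.AtPrime p.asIdeal)
      (Localization.AtPrime p.asIdeal) (fun μ => ℳ μ)))

/-- A degree-preserving map commutes with taking homogeneous components. -/
lemma decompose_map {M M' : Type} [AddCommGroup M] [Module A M] [AddCommGroup M'] [Module A M']
    (ℳ : G → Submodule A M) [DirectSum.Decomposition ℳ]
    (ℳ' : G → Submodule A M') [DirectSum.Decomposition ℳ']
    (f : M →ₗ[A] M') (hf : ∀ μ, ∀ x ∈ ℳ μ, f x ∈ ℳ' μ) (x : M) (μ : G) :
    (DirectSum.decompose ℳ' (f x) μ : M') = f (DirectSum.decompose ℳ x μ) := by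
  induction x using DirectSum.Decomposition.inductionOn ℳ with
  | zero => simp
  | @homogeneous i m =>
    by_cases him : i = μ
    · subst him
      rw [DirectSum.decompose_of_mem_same ℳ' (hf _ _ m.2),
        DirectSum.decompose_of_mem_same ℳ m.2]
    · rw [DirectSum.decompose_of_mem_ne ℳ' (hf _ _ m.2) him,
        DirectSum.decompose_of_mem_ne ℳ m.2 him, map_zero]
  | add m m' h h' => simp [h, h']

/-- A subquotient `q : Z → H`, `ι : Z → M` of a graded module is the direct sum of the pieces
induced by the grading, provided that the images in `M` of `Z` and of `ker q` are homogeneous. -/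
lemma isInternal_of_homogeneous {M Z H : Type} [AddCommGroup M] [Module A M]
    [AddCommGroup Z] [Module A Z] [AddCommGroup H] [Module A H]
    (ℳ : G → Submodule A M) [DirectSum.Decomposition ℳ]
    (ι : Z →ₗ[A] M) (hι : Function.Injective ι) (q : Z →ₗ[A] H) (hq : Function.Surjective q)
    (hZ : ∀ z μ, ∃ z', ι z' = DirectSum.decompose ℳ (ι z) μ)
    (hB : ∀ z, q z = 0 → ∀ μ z', ι z' = DirectSum.decompose ℳ (ι z) μ → q z' = 0) :
    DirectSum.IsInternal fun μ => Submodule.map q (Submodule.comap ι (ℳ μ)) := by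
  classical
  apply DirectSum.isInternal_submodule_of_iSupIndep_of_iSup_eq_top
  · intro μ
    rw [Submodule.disjoint_def]
    rintro x ⟨z, hz, rfl⟩ hx
    simp only [← Submodule.map_iSup] at hx
    obtain ⟨z', hz', hzz'⟩ := hx
    -- the elements of `Z` without component in degree `μ`
    let π : M →ₗ[A] M := (ℳ μ).subtype ∘ₗ DirectSum.component A G (fun ν => ℳ ν) μ ∘ₗ
      (DirectSum.decomposeLinearEquiv ℳ).toLinearMap
    have hπ (m : M) : π m = DirectSum.decompose ℳ m μ := rfl
    have hle : (⨆ ν, ⨆ (_ : ν ≠ μ), Submodule.comap ι (ℳ ν)) ≤ LinearMap.ker (π ∘ₗ ι) := by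
      refine iSup₂_le fun ν hν y hy => ?_
      rw [LinearMap.mem_ker, LinearMap.comp_apply, hπ]
      exact DirectSum.decompose_of_mem_ne ℳ hy hν
    have h0 : π (ι z') = 0 := hle hz'
    refine hB (z - z') (by rw [map_sub, hzz', sub_self]) μ z ?_
    rw [← hπ, map_sub, map_sub, h0, sub_zero, hπ]
    exact (DirectSum.decompose_of_mem_same ℳ hz).symm
  · rw [eq_top_iff]
    rintro x -
    obtain ⟨z, rfl⟩ := hq x
    choose c hc using hZ z
    have hz : z = ∑ μ ∈ (DirectSum.decompose ℳ (ι z)).support, c μ := by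
      apply hι
      rw [map_sum]
      simp only [hc]
      exact (DirectSum.sum_support_decompose ℳ (ι z)).symm
    rw [hz, map_sum]
    refine sum_mem fun μ _ => Submodule.mem_iSup_of_mem μ ⟨c μ, ?_, rfl⟩
    rw [SetLike.mem_coe, Submodule.mem_comap, hc]
    exact SetLike.coe_mem _

/-- The homology of graded maps `K → M → P`, which are linear over some `A`-algebra `R`, is the
direct sum of the pieces induced by the grading of `M`. -/
lemma isInternal_homology {R K M P : Type} [CommRing R] [Algebra A R] [AddCommGroup K]
    [AddCommGroup M] [AddCommGroup P] [Module R K] [Module R M] [Module R P] [Module A K]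
    [Module A M] [Module A P] [IsScalarTower A R K] [IsScalarTower A R M] [IsScalarTower A R P]
    (𝒦 : G → Submodule A K) [DirectSum.Decomposition 𝒦]
    (ℳ : G → Submodule A M) [DirectSum.Decomposition ℳ]
    (𝒬 : G → Submodule A P) [DirectSum.Decomposition 𝒬]
    (g : K →ₗ[R] M) (f : M →ₗ[R] P)
    (hg : ∀ μ, ∀ x ∈ 𝒦 μ, g x ∈ ℳ μ) (hf : ∀ μ, ∀ x ∈ ℳ μ, f x ∈ 𝒬 μ) :
    DirectSum.IsInternal fun μ => Submodule.map
      ((((LinearMap.range g).comap (LinearMap.ker f).subtype).mkQ).restrictScalars A)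
      (Submodule.comap ((LinearMap.ker f).subtype.restrictScalars A) (ℳ μ)) := by
  have hg' := decompose_map 𝒦 ℳ (g.restrictScalars A) hg
  have hf' := decompose_map ℳ 𝒬 (f.restrictScalars A) hf
  refine isInternal_of_homogeneous ℳ ((LinearMap.ker f).subtype.restrictScalars A) ?_
    (((LinearMap.range g).comap (LinearMap.ker f).subtype).mkQ.restrictScalars A) ?_ ?_ ?_
  · exact (LinearMap.ker f).injective_subtype
  · exact Submodule.mkQ_surjective ((LinearMap.range g).comap (LinearMap.ker f).subtype)
  · rintro ⟨z, hz⟩ μ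
    refine ⟨⟨DirectSum.decompose ℳ z μ, ?_⟩, rfl⟩
    have := hf' z μ
    simp only [LinearMap.restrictScalars_apply, LinearMap.mem_ker.1 hz] at this
    rw [LinearMap.mem_ker, ← this]
    simp
  · rintro ⟨z, hz⟩ hqz μ z' hz'
    obtain ⟨k, hk⟩ := (Submodule.Quotient.mk_eq_zero _).1 hqz
    refine (Submodule.Quotient.mk_eq_zero _).2 ⟨DirectSum.decompose 𝒦 k μ, ?_⟩
    refine (hg' k μ).symm.trans (Eq.trans ?_ hz'.symm)
    exact congrArg (fun y => (DirectSum.decompose ℳ y μ : M)) hk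

end Graded

/-! ### Homology of a composable pair -/

/-- With `Z = ker f`, `I = im f` and `H = Z / im g`: if `Z → M` and `I → P` remain injective after
tensoring with `N`, then `Z ⊗ N` is the kernel of `f ⊗ N`, and right exactness identifies the
homology of the tensored pair with `H ⊗ N`. -/
lemma nonempty_homology_equiv {A K M P Z I H N : Type} [CommRing A] [AddCommGroup K]
    [AddCommGroup M] [AddCommGroup P] [AddCommGroup Z] [AddCommGroup I] [AddCommGroup H]
    [AddCommGroup N] [Module A K] [Module A M] [Module A P] [Module A Z] [Module A I] [Module A H]
    [Module A N] (g : K →ₗ[A] M) (f : M →ₗ[A] P) (ι : Z →ₗ[A] M) (f' : M →ₗ[A] I) (j : I →ₗ[A] P)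
    (g' : K →ₗ[A] Z) (q : Z →ₗ[A] H) (hg : ι ∘ₗ g' = g) (hf : j ∘ₗ f' = f)
    (hf' : Function.Surjective f') (hιf : Function.Exact ι f')
    (hq : Function.Surjective q) (hgq : Function.Exact g' q)
    (hιN : Function.Injective (ι.rTensor N)) (hjN : Function.Injective (j.rTensor N)) :
    Nonempty (ModuleHomology (g.rTensor N) (f.rTensor N) ≃ₗ[A] H ⊗[A] N) := by
  have hker : LinearMap.ker (f.rTensor N) = LinearMap.range (ι.rTensor N) := by
    rw [← hf, LinearMap.rTensor_comp, LinearMap.ker_comp_of_ker_eq_bot _ (LinearMap.ker_eq_bot.2 hjN)]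
    exact LinearMap.exact_iff.1 (rTensor_exact N hιf hf')
  let e : Z ⊗[A] N ≃ₗ[A] LinearMap.ker (f.rTensor N) :=
    (LinearEquiv.ofInjective _ hιN).trans (LinearEquiv.ofEq _ _ hker.symm)
  have he (t : Z ⊗[A] N) : (e t : M ⊗[A] N) = ι.rTensor N t := rfl
  have hmap : (LinearMap.range (g'.rTensor N)).map e.toLinearMap =
      (LinearMap.range (g.rTensor N)).comap (LinearMap.ker (f.rTensor N)).subtype := by
    ext x
    simp only [Submodule.mem_map, Submodule.mem_comap, LinearMap.mem_range, ← hg,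
      LinearMap.rTensor_comp, LinearMap.comp_apply, Submodule.subtype_apply]
    constructor
    · rintro ⟨_, ⟨k, rfl⟩, rfl⟩
      exact ⟨k, rfl⟩
    · rintro ⟨k, hk⟩
      exact ⟨_, ⟨k, rfl⟩, Subtype.ext hk⟩
  exact ⟨(Submodule.Quotient.equiv _ _ e hmap).symm.trans (rTensor.equiv N hgq hq)⟩

section Subquotients

variable {A L R K M P : Type} [CommRing A] [CommRing L] [Algebra A L] [Module.Flat A L]
  [CommRing R] [Algebra A R] [AddCommGroup K] [AddCommGroup M] [AddCommGroup P]
  [Module R K] [Module R M] [Module R P] [Module A K] [Module A M] [Module A P]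
  [IsScalarTower A R K] [IsScalarTower A R M] [IsScalarTower A R P]

omit [Module A M] [IsScalarTower A R M] in
/-- `im f` is the kernel of the projection of `P` onto `P / im f`. -/
lemma baseChange_flat_range (f : M →ₗ[R] P) (h1 : Module.Flat L (L ⊗[A] P))
    (h2 : Module.Flat L (L ⊗[A] (P ⧸ LinearMap.range f))) :
    Module.Flat L (L ⊗[A] LinearMap.range f) :=
  baseChange_flat_of_exact_left ((LinearMap.range f).subtype.restrictScalars A)
    ((LinearMap.range f).mkQ.restrictScalars A) (LinearMap.range f).injective_subtype
    (LinearMap.range f).mkQ_surjective (LinearMap.exact_subtype_mkQ (LinearMap.range f)) h1 h2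

omit [Module A K] [IsScalarTower A R K] in
/-- `M / im g` is an extension of `im f` by the homology `ker f / im g`. -/
lemma baseChange_flat_coker (g : K →ₗ[R] M) (f : M →ₗ[R] P)
    (hle : LinearMap.range g ≤ LinearMap.ker f)
    (hH : Module.Flat L (L ⊗[A] ModuleHomology g f))
    (hI : Module.Flat L (L ⊗[A] LinearMap.range f)) :
    Module.Flat L (L ⊗[A] (M ⧸ LinearMap.range g)) := by
  let u : ModuleHomology g f →ₗ[R] M ⧸ LinearMap.range g :=
    Submodule.mapQ _ _ (LinearMap.ker f).subtype le_rfl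
  let v : (M ⧸ LinearMap.range g) →ₗ[R] LinearMap.range f :=
    Submodule.liftQ _ f.rangeRestrict (by rw [LinearMap.ker_rangeRestrict]; exact hle)
  refine baseChange_flat_of_exact_middle (u.restrictScalars A) (v.restrictScalars A)
    ?_ ?_ ?_ hH hI
  · change Function.Injective u
    rw [injective_iff_map_eq_zero]
    intro x hx
    obtain ⟨z, rfl⟩ := Submodule.mkQ_surjective _ x
    have hz : (z : M) ∈ LinearMap.range g := (Submodule.Quotient.mk_eq_zero _).1 hx
    exact (Submodule.Quotient.mk_eq_zero _).2 hz
  · intro y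
    obtain ⟨x, rfl⟩ := f.surjective_rangeRestrict y
    exact ⟨Submodule.Quotient.mk x, rfl⟩
  · intro y
    obtain ⟨x, rfl⟩ := Submodule.mkQ_surjective _ y
    constructor
    · intro hx
      exact ⟨Submodule.Quotient.mk ⟨x, congrArg Subtype.val hx⟩, rfl⟩
    · rintro ⟨z, hz⟩
      obtain ⟨z, rfl⟩ := Submodule.mkQ_surjective _ z
      rw [← hz]
      exact Subtype.ext z.2

/-- If `P` and `P / im f` become flat over `L`, then forming `ker f / im g` commutes with tensoring
with an `L`-module. -/
lemma nonempty_homology_equiv_of_flat (g : K →ₗ[R] M) (f : M →ₗ[R] P)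
    (hle : LinearMap.range g ≤ LinearMap.ker f) (h1 : Module.Flat L (L ⊗[A] P))
    (h2 : Module.Flat L (L ⊗[A] (P ⧸ LinearMap.range f)))
    (N : Type) [AddCommGroup N] [Module A N] [Module L N] [IsScalarTower A L N] :
    Nonempty (ModuleHomology ((g.restrictScalars A).rTensor N) ((f.restrictScalars A).rTensor N)
      ≃ₗ[A] ModuleHomology g f ⊗[A] N) := by
  have hιf : Function.Exact ((LinearMap.ker f).subtype.restrictScalars A)
      (f.rangeRestrict.restrictScalars A) := fun x =>
    ⟨fun hx => ⟨⟨x, congrArg Subtype.val hx⟩, rfl⟩, by rintro ⟨z, rfl⟩; exact Subtype.ext z.2⟩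
  have hgq : Function.Exact
      ((g.codRestrict (LinearMap.ker f) fun x => hle ⟨x, rfl⟩).restrictScalars A)
      (((LinearMap.range g).comap (LinearMap.ker f).subtype).mkQ.restrictScalars A) := by
    intro z
    refine (Submodule.Quotient.mk_eq_zero _).trans ?_
    exact ⟨fun ⟨k, hk⟩ => ⟨k, Subtype.ext hk⟩, fun ⟨k, hk⟩ => ⟨k, congrArg Subtype.val hk⟩⟩
  refine nonempty_homology_equiv _ _ _ (f.rangeRestrict.restrictScalars A)
    ((LinearMap.range f).subtype.restrictScalars A) _ _ rfl rfl
    f.surjective_rangeRestrict hιf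
    ((LinearMap.range g).comap (LinearMap.ker f).subtype).mkQ_surjective hgq ?_ ?_
  · exact rTensor_injective_of_flat_baseChange (L := L)
      ((LinearMap.ker f).subtype.restrictScalars A) (f.rangeRestrict.restrictScalars A)
      (LinearMap.ker f).injective_subtype
      f.surjective_rangeRestrict hιf (baseChange_flat_range f h1 h2) N
  · exact rTensor_injective_of_flat_baseChange (L := L)
      ((LinearMap.range f).subtype.restrictScalars A)
      ((LinearMap.range f).mkQ.restrictScalars A) (LinearMap.range f).injective_subtype
      (LinearMap.range f).mkQ_surjective (LinearMap.exact_subtype_mkQ (LinearMap.range f)) h2 N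

end Subquotients

theorem homology_commutes_with_specialization_of_complexes
    (A : Type) [CommRing A] [IsNoetherianRing A]
    (G : Type) [AddCommGroup G] [DecidableEq G]
    (r : ℕ) (w : Fin r → G) (ψ : G →+ ℤ) (hψ : ∀ i, 0 < ψ (w i))
    -- a chain complex `P_•` of finitely generated graded `R`-modules:
    (P : ℤ → Type) [∀ i, AddCommGroup (P i)]
    [∀ i, Module (MvPolynomial (Fin r) A) (P i)]
    [∀ i, Module A (P i)] [∀ i, IsScalarTower A (MvPolynomial (Fin r) A) (P i)]
    [∀ i, Module.Finite (MvPolynomial (Fin r) A) (P i)]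
    (℘ : ∀ i : ℤ, G → Submodule A (P i))
    [∀ i, DirectSum.Decomposition (℘ i)]
    [∀ i, SetLike.GradedSMul (weightedHomogeneousSubmodule A w) (℘ i)]
    (d : ∀ i : ℤ, P (i + 1) →ₗ[MvPolynomial (Fin r) A] P i)
    (hd_graded : ∀ (i : ℤ) (μ : G) (x : P (i + 1)), x ∈ ℘ (i + 1) μ → d i x ∈ ℘ i μ)
    (hcomplex : ∀ i : ℤ, (d i).comp (d (i + 1)) = 0)
    (hbot : ∀ i : ℤ, i < 0 → Subsingleton (P i))
    (s : ℕ) (p : PrimeSpectrum A)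
    -- `p ∉ ⋃_{i=0}^s (T_{P_i} ∪ T_{H_i(P_•)})`, where the grading on
    -- `H_{j+1} = ker (d j) / im (d (j+1))` is the induced one:
    (hpP : ∀ j : ℤ, -1 ≤ j → j + 1 ≤ (s : ℤ) → InFreeLocus (℘ (j + 1)) p)
    (hpH : ∀ j : ℤ, -1 ≤ j → j + 1 ≤ (s : ℤ) →
      InFreeLocus (fun μ : G =>
        Submodule.map
          ((((LinearMap.range (d (j + 1))).comap
              (LinearMap.ker (d j)).subtype).mkQ).restrictScalars A)
          (Submodule.comap ((LinearMap.ker (d j)).subtype.restrictScalars A)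
            (℘ (j + 1) μ))) p)
    -- an arbitrary `A_p`-module `N`:
    (N : Type) [AddCommGroup N] [Module (Localization.AtPrime p.asIdeal) N]
    [Module A N] [IsScalarTower A (Localization.AtPrime p.asIdeal) N] :
    ∀ j : ℤ, -1 ≤ j → j + 1 ≤ (s : ℤ) →
      Nonempty
        ((ModuleHomology (LinearMap.rTensor N ((d (j + 1)).restrictScalars A))
            (LinearMap.rTensor N ((d j).restrictScalars A)))
          ≃ₗ[A] TensorProduct A (ModuleHomology (d (j + 1)) (d j)) N) := by
  let L := Localization.AtPrime p.asIdeal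
  have hLflat : Module.Flat A L := IsLocalization.flat L p.asIdeal.primeCompl
  have hle (j : ℤ) : LinearMap.range (d (j + 1)) ≤ LinearMap.ker (d j) :=
    LinearMap.range_le_ker_iff.2 (hcomplex j)
  have hP (j : ℤ) (h1 : -1 ≤ j) (h2 : j + 1 ≤ (s : ℤ)) : Module.Flat L (L ⊗[A] P (j + 1)) :=
    flat_of_inFreeLocus _ (DirectSum.Decomposition.isInternal _) p (hpP j h1 h2)
  have hH (j : ℤ) (h1 : -1 ≤ j) (h2 : j + 1 ≤ (s : ℤ)) :
      Module.Flat L (L ⊗[A] ModuleHomology (d (j + 1)) (d j)) := by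
    refine flat_of_inFreeLocus _ ?_ p (hpH j h1 h2)
    exact isInternal_homology (℘ (j + 1 + 1)) (℘ (j + 1)) (℘ j) (d (j + 1)) (d j)
      (hd_graded (j + 1)) (hd_graded j)
  have hC (n : ℕ) : ∀ j : ℤ, j = -1 + n → j ≤ (s : ℤ) → Module.Flat L (L ⊗[A] P j) ∧
      Module.Flat L (L ⊗[A] (P j ⧸ LinearMap.range (d j))) := by
    induction n with
    | zero =>
      intro j hj _
      have := hbot j (by omega)
      have : Subsingleton (P j ⧸ LinearMap.range (d j)) :=
        (Submodule.mkQ_surjective _).subsingleton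
      exact ⟨inferInstance, inferInstance⟩
    | succ n ih =>
      intro j' hj' hs
      obtain ⟨j, rfl⟩ : ∃ j, j' = j + 1 := ⟨j' - 1, by ring⟩
      obtain ⟨h1, h2⟩ := ih j (by push_cast at hj'; omega) (by omega)
      refine ⟨hP j (by omega) hs, ?_⟩
      exact baseChange_flat_coker (d (j + 1)) (d j) (hle j) (hH j (by omega) hs)
        (baseChange_flat_range (d j) h1 h2)
  intro j hj1 hj2
  obtain ⟨h1, h2⟩ := hC (j + 1).toNat j (by omega) (by omega)
  exact nonempty_homology_equiv_of_flat (L := L) (d (j + 1)) (d j) (hle j) h1 h2 N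
end
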